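/- There exists a function R : (0,∞) → (0,∞) such that Q^{h,R(h)} converges to Q as h → 0⁺; that is, the family of discrete velocity models on the scaled integer lattices hℤ² is consistent with the two-dimensional Boltzmann collision operator. -/

import Mathlib

/-- The set of lattice points `(x, y) ∈ ℤ²` with `x² + y² = n`. -/
noncomputable def latticeCircle (n : ℕ) : Finset (ℤ × ℤ) :=
  (Finset.Icc (-(n : ℤ)) (n : ℤ) ×ˢ Finset.Icc (-(n : ℤ)) (n : ℤ)).filter
    (fun p => p.1 ^ 2 + p.2 ^ 2 = (n : ℤ))

/-- `r n` is the number of lattice points on the circle of squared radius `n`. -/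
noncomputable def latticeR (n : ℕ) : ℕ := (latticeCircle n).card

/-- The angle `θ_u ∈ [0, 2π)` of a lattice point `u`. -/
noncomputable def latticeTheta (u : ℤ × ℤ) : ℝ :=
  if 0 ≤ Complex.arg ((u.1 : ℂ) + (u.2 : ℂ) * Complex.I)
  then Complex.arg ((u.1 : ℂ) + (u.2 : ℂ) * Complex.I)
  else Complex.arg ((u.1 : ℂ) + (u.2 : ℂ) * Complex.I) + 2 * Real.pi

/-- The exponential sum `S(m, k) = Σ_{u ∈ ℤ², |u|² = m} exp(i k θ_u)`. -/
noncomputable def latticeS (m : ℕ) (k : ℤ) : ℂ :=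
  ∑ u ∈ latticeCircle m, Complex.exp ((k : ℂ) * (latticeTheta u : ℂ) * Complex.I)


/-- The continuous collision value `Q = ∫_{ℝ²} (1/2π) ∫_{-π}^{π} g(w,θ) dθ dw`. -/
noncomputable def Qcont (g : ℝ × ℝ → ℝ → ℝ) : ℝ :=
  ∫ w : ℝ × ℝ, (1 / (2 * Real.pi)) * ∫ θ in (-Real.pi)..Real.pi, g w θ

/-- The truncated lattice discrete-velocity approximation
`Q^{h,R} = h² Σ_{ζ ∈ ℤ², 0 < |hζ| ≤ R} (1/r(|ζ|²)) Σ_{|ζ'| = |ζ|} g(hζ, θ_{ζ'} - θ_ζ)`. -/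
noncomputable def Qdisc (g : ℝ × ℝ → ℝ → ℝ) (h R : ℝ) : ℝ :=
  h ^ 2 *
    ∑ᶠ ζ ∈ {ζ : ℤ × ℤ | ζ ≠ 0 ∧ h ^ 2 * ((ζ.1 : ℝ) ^ 2 + (ζ.2 : ℝ) ^ 2) ≤ R ^ 2},
      (1 / (latticeR (ζ.1 ^ 2 + ζ.2 ^ 2).toNat : ℝ)) *
        ∑ ζ' ∈ latticeCircle (ζ.1 ^ 2 + ζ.2 ^ 2).toNat,
          g (h * (ζ.1 : ℝ), h * (ζ.2 : ℝ)) (latticeTheta ζ' - latticeTheta ζ)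

/-!
Expand `g` in the angle: by density of the trigonometric polynomials it suffices to show that the
exponential sums `S(n, k)` with `k ≠ 0` satisfy `∑_{n ≤ N} |S(n, k)| = o(N)`. Few integers are sums
of two squares: those divisible by a prime `p ≡ 3 (mod 4)` exactly once are not, and `∑ 1 / p`
diverges over these primes. Hence `S(n, k) = 0` for all but `o(N)` of the `n ≤ N`, and by
Cauchy–Schwarz a second moment bound `∑_{n ≤ N} |S(n, k)|² = O(N)` is enough. For the latter, unique
factorisation in `ℤ[i]` bounds `|S(n, k)|²` by the Dirichlet convolution of `r` with `S(·, 2k)`, up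
to a bounded factor, and the partial sums of `S(·, 2k)` are sums of an angular character over the
lattice points of a disc, which are `O(√N)` since the corresponding integral vanishes.

For a fixed truncation radius the angular means may therefore be replaced by their continuous
counterparts, which leaves a Riemann sum. The radius is then sent to infinity along a diagonal.
-/

namespace LatticeDVM

open Finset Filter MeasureTheory Asymptotics
open scoped Topology ComplexConjugate

/-! ### Angular characters -/

/-- The angular character `z ↦ (z / |z|) ^ k`, which is `exp (i k θ)` at `z = |z| exp (i θ)`. As it
is multiplicative, divisor sums over Gaussian integers factor. At `z = 0` it takes the value `0` if
`k ≠ 0`. -/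
noncomputable def angularChar (k : ℤ) : ℂ →* ℂ where
  toFun z := (z / ‖z‖) ^ k
  map_one' := by simp
  map_mul' z w := by rw [norm_mul, Complex.ofReal_mul, mul_div_mul_comm, mul_zpow]

lemma angularChar_apply (k : ℤ) (z : ℂ) : angularChar k z = (z / ‖z‖) ^ k := rfl

lemma angularChar_conj (k : ℤ) (z : ℂ) : angularChar k (conj z) = conj (angularChar k z) := by
  simp only [angularChar_apply, map_zpow₀, map_div₀, Complex.norm_conj, Complex.conj_ofReal]

lemma angularChar_zero {k : ℤ} (hk : k ≠ 0) : angularChar k 0 = 0 := by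
  simp [angularChar_apply, zero_zpow k hk]

lemma norm_div_norm_self {z : ℂ} (hz : z ≠ 0) : ‖z / (‖z‖ : ℂ)‖ = 1 := by
  rw [norm_div, Complex.norm_real, norm_norm, div_self (norm_ne_zero_iff.mpr hz)]

lemma norm_angularChar (k : ℤ) {z : ℂ} (hz : z ≠ 0) : ‖angularChar k z‖ = 1 := by
  rw [angularChar_apply, norm_zpow, norm_div_norm_self hz, one_zpow]

lemma norm_angularChar_le_one {k : ℤ} (hk : k ≠ 0) (z : ℂ) : ‖angularChar k z‖ ≤ 1 := by
  obtain rfl | hz := eq_or_ne z 0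
  · simp [angularChar_zero hk]
  · exact (norm_angularChar k hz).le

lemma angularChar_two_mul (k : ℤ) {z : ℂ} (hz : z ≠ 0) :
    angularChar (2 * k) z = angularChar k z * angularChar k z := by
  have hz' : z / (‖z‖ : ℂ) ≠ 0 := div_ne_zero hz (by simpa using hz)
  rw [angularChar_apply, two_mul, zpow_add₀ hz', angularChar_apply]

lemma measurable_angularChar (k : ℤ) : Measurable (angularChar k) := by
  change Measurable fun z : ℂ => (z / (‖z‖ : ℂ)) ^ k
  fun_prop

lemma angularChar_exp (k : ℤ) (t : ℝ) :
    angularChar k (Complex.exp (t * Complex.I)) = Complex.exp (k * t * Complex.I) := by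
  rw [angularChar_apply, Complex.norm_exp_ofReal_mul_I, Complex.ofReal_one, div_one,
    ← Complex.exp_int_mul, mul_assoc]

lemma norm_pow_sub_pow_le {𝕜 : Type*} [NormedField 𝕜] {a b : 𝕜} (ha : ‖a‖ = 1) (hb : ‖b‖ = 1)
    (n : ℕ) : ‖a ^ n - b ^ n‖ ≤ n * ‖a - b‖ := by
  induction n with
  | zero => simp
  | succ n ih =>
    calc ‖a ^ (n + 1) - b ^ (n + 1)‖ = ‖a ^ n * (a - b) + (a ^ n - b ^ n) * b‖ := by ring_nf
      _ ≤ ‖a ^ n * (a - b)‖ + ‖(a ^ n - b ^ n) * b‖ := norm_add_le _ _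
      _ = ‖a - b‖ + ‖a ^ n - b ^ n‖ := by simp [ha, hb]
      _ ≤ (n + 1 : ℕ) * ‖a - b‖ := by push_cast; linarith

lemma norm_zpow_sub_zpow_le {𝕜 : Type*} [NormedField 𝕜] {a b : 𝕜} (ha : ‖a‖ = 1) (hb : ‖b‖ = 1)
    (k : ℤ) : ‖a ^ k - b ^ k‖ ≤ |(k : ℝ)| * ‖a - b‖ := by
  obtain ⟨n, rfl | rfl⟩ := k.eq_nat_or_neg
  · simpa using norm_pow_sub_pow_le ha hb n
  · have ha' : ‖a⁻¹‖ = 1 := by rw [norm_inv, ha, inv_one]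
    have hb' : ‖b⁻¹‖ = 1 := by rw [norm_inv, hb, inv_one]
    have h_inv : ‖a⁻¹ - b⁻¹‖ = ‖a - b‖ := by
      rw [inv_sub_inv (norm_ne_zero_iff.mp (ha ▸ one_ne_zero))
        (norm_ne_zero_iff.mp (hb ▸ one_ne_zero)), norm_div, norm_mul, ha, hb, norm_sub_rev,
        one_mul, div_one]
    simpa [h_inv] using norm_pow_sub_pow_le ha' hb' n

lemma norm_angularChar_sub_le (k : ℤ) {z w : ℂ} (hz : z ≠ 0) (hw : w ≠ 0) :
    ‖angularChar k z - angularChar k w‖ ≤ |(k : ℝ)| * (2 * ‖z - w‖ / ‖z‖) := by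
  have hzc : (‖z‖ : ℂ) ≠ 0 := by simpa using hz
  have hwc : (‖w‖ : ℂ) ≠ 0 := by simpa using hw
  have h_split : z / (‖z‖ : ℂ) - w / (‖w‖ : ℂ) =
      (z - w) / (‖z‖ : ℂ) + w / (‖w‖ : ℂ) * (((‖w‖ - ‖z‖ : ℝ) : ℂ) / (‖z‖ : ℂ)) := by
    push_cast
    field_simp
    ring
  refine (norm_zpow_sub_zpow_le (norm_div_norm_self hz) (norm_div_norm_self hw) k).trans ?_
  gcongr
  calc ‖z / (‖z‖ : ℂ) - w / (‖w‖ : ℂ)‖ ≤ ‖z - w‖ / ‖z‖ + |‖w‖ - ‖z‖| / ‖z‖ := by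
        rw [h_split]
        refine (norm_add_le _ _).trans_eq ?_
        rw [norm_mul, norm_div_norm_self hw, one_mul, norm_div, norm_div, Complex.norm_real,
          Complex.norm_real, norm_norm, Real.norm_eq_abs]
    _ ≤ ‖z - w‖ / ‖z‖ + ‖z - w‖ / ‖z‖ := by
        gcongr
        exact norm_sub_rev z w ▸ abs_norm_sub_norm_le w z
    _ = 2 * ‖z - w‖ / ‖z‖ := by ring

/-! ### Spheres and balls of Gaussian integers -/

lemma norm_eq_sq_add_sq (z : GaussianInt) : z.norm = z.re ^ 2 + z.im ^ 2 := by
  rw [Zsqrtd.norm_def]; ring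

lemma norm_toComplex_sq (z : GaussianInt) : ‖(z : ℂ)‖ ^ 2 = (z.norm : ℝ) := by
  rw [← Complex.normSq_eq_norm_sq]
  exact (GaussianInt.intCast_real_norm z).symm

/-- The lattice point `(x, y)` as the Gaussian integer `x + i y`. -/
def gaussianEquiv : ℤ × ℤ ≃ GaussianInt where
  toFun p := ⟨p.1, p.2⟩
  invFun z := (z.re, z.im)
  left_inv _ := rfl
  right_inv _ := rfl

/-- The Gaussian integers of norm `n`, a copy of `latticeCircle n` carrying a multiplication. -/
noncomputable def gaussianSphere (n : ℕ) : Finset GaussianInt :=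
  (latticeCircle n).map gaussianEquiv.toEmbedding

lemma mem_Icc_of_sq_le {a N : ℤ} (h : a ^ 2 ≤ N) : a ∈ Finset.Icc (-N) N :=
  Finset.mem_Icc.mpr ⟨by nlinarith, by nlinarith⟩

lemma mem_latticeCircle {n : ℕ} {p : ℤ × ℤ} :
    p ∈ latticeCircle n ↔ p.1 ^ 2 + p.2 ^ 2 = (n : ℤ) := by
  rw [latticeCircle, mem_filter, and_iff_right_iff_imp, mem_product]
  intro h
  exact ⟨mem_Icc_of_sq_le (by nlinarith [sq_nonneg p.2]),
    mem_Icc_of_sq_le (by nlinarith [sq_nonneg p.1])⟩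

lemma mem_gaussianSphere {n : ℕ} {z : GaussianInt} : z ∈ gaussianSphere n ↔ z.norm = n := by
  rw [gaussianSphere, mem_map_equiv, mem_latticeCircle, norm_eq_sq_add_sq]
  rfl

lemma ne_zero_of_mem_gaussianSphere {n : ℕ} (hn : 0 < n) {z : GaussianInt}
    (hz : z ∈ gaussianSphere n) : z ≠ 0 := by
  rintro rfl
  rw [mem_gaussianSphere, Zsqrtd.norm_zero] at hz
  omega

lemma card_gaussianSphere (n : ℕ) : #(gaussianSphere n) = latticeR n := card_map _

lemma exp_latticeTheta {u : ℤ × ℤ} (hu : u ≠ 0) (k : ℤ) :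
    Complex.exp (k * latticeTheta u * Complex.I) =
      angularChar k (gaussianEquiv u : GaussianInt) := by
  set w : ℂ := (u.1 : ℂ) + (u.2 : ℂ) * Complex.I with hw
  have h_cast : ((gaussianEquiv u : GaussianInt) : ℂ) = w := GaussianInt.toComplex_def _
  have hw0 : (‖w‖ : ℂ) ≠ 0 := by
    rw [← h_cast, Ne, Complex.ofReal_eq_zero, norm_eq_zero, GaussianInt.toComplex_eq_zero]
    exact gaussianEquiv.injective.ne hu
  have h_exp : Complex.exp (latticeTheta u * Complex.I) = w / ‖w‖ := by
    have h_arg : Complex.exp (Complex.arg w * Complex.I) = w / ‖w‖ := by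
      rw [eq_div_iff hw0, mul_comm, Complex.norm_mul_exp_arg_mul_I]
    rw [latticeTheta, ← hw]
    split_ifs
    · exact h_arg
    · push_cast
      rw [add_mul, Complex.exp_add, h_arg, Complex.exp_two_pi_mul_I, mul_one]
  rw [h_cast, angularChar_apply, ← h_exp, ← Complex.exp_int_mul, mul_assoc]

lemma latticeS_eq_sum_angularChar {n : ℕ} (hn : 0 < n) (k : ℤ) :
    latticeS n k = ∑ z ∈ gaussianSphere n, angularChar k (z : ℂ) := by
  rw [gaussianSphere, sum_map, latticeS]
  refine sum_congr rfl fun u hu => exp_latticeTheta ?_ k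
  rintro rfl
  have := mem_latticeCircle.mp hu
  norm_num at this
  omega

/-- The Gaussian integers whose norm lies in `s`. -/
noncomputable def gaussianShell (s : Finset ℕ) : Finset GaussianInt := s.biUnion gaussianSphere

lemma mem_gaussianShell {s : Finset ℕ} {z : GaussianInt} :
    z ∈ gaussianShell s ↔ ∃ n ∈ s, z.norm = n := by
  simp only [gaussianShell, mem_biUnion, mem_gaussianSphere]

lemma sum_gaussianShell {E : Type*} [AddCommMonoid E] (s : Finset ℕ) (f : GaussianInt → E) :
    ∑ z ∈ gaussianShell s, f z = ∑ n ∈ s, ∑ z ∈ gaussianSphere n, f z := by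
  refine sum_biUnion fun m _ n _ hmn => disjoint_left.mpr fun z hm hn => hmn ?_
  rw [mem_gaussianSphere] at hm hn
  exact_mod_cast hm.symm.trans hn

/-- The nonzero Gaussian integers of norm at most `N`. -/
noncomputable abbrev gaussianBall (N : ℕ) : Finset GaussianInt := gaussianShell (Finset.Ioc 0 N)

lemma mem_gaussianBall {N : ℕ} {z : GaussianInt} :
    z ∈ gaussianBall N ↔ z ≠ 0 ∧ z.norm ≤ N := by
  have h_cast : (z.norm.natAbs : ℤ) = z.norm := Int.natAbs_of_nonneg (GaussianInt.norm_nonneg z)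
  have h_pos : 0 < z.norm ↔ z ≠ 0 := GaussianInt.norm_pos
  simp only [mem_gaussianShell, Finset.mem_Ioc]
  rw [← h_pos]
  exact ⟨fun ⟨n, hn, hz⟩ => by omega, fun h => ⟨z.norm.natAbs, by omega, h_cast.symm⟩⟩

lemma card_gaussianBall_le (N : ℕ) : #(gaussianBall N) ≤ 9 * N := by
  obtain rfl | hN := N.eq_zero_or_pos
  · simp [gaussianShell]
  set s := N.sqrt
  have hsN : s * s ≤ N := N.sqrt_le
  have hs1 : 1 ≤ s := Nat.sqrt_pos.mpr hN
  have h_coord : ∀ a b : ℤ, a ^ 2 + b ^ 2 ≤ N → a ∈ Finset.Icc (-(s : ℤ)) s := fun a b hab => by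
    have : a.natAbs ≤ s := Nat.le_sqrt.mpr (by zify; nlinarith [abs_mul_abs_self a, sq_nonneg b])
    rw [Finset.mem_Icc]
    omega
  have h_maps : ∀ z ∈ gaussianBall N, gaussianEquiv.symm z ∈
      Finset.Icc (-(s : ℤ)) s ×ˢ Finset.Icc (-(s : ℤ)) s := fun z hz => by
    have hz := (mem_gaussianBall.mp hz).2
    rw [norm_eq_sq_add_sq] at hz
    exact mem_product.mpr ⟨h_coord _ _ hz, h_coord z.im z.re (by linarith)⟩
  calc #(gaussianBall N) ≤ (2 * s + 1) * (2 * s + 1) := by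
        refine (card_le_card_of_injOn _ h_maps gaussianEquiv.symm.injective.injOn).trans_eq ?_
        rw [card_product, Int.card_Icc]
        congr 1 <;> omega
    _ ≤ 9 * N := by nlinarith

lemma sum_latticeR_le (N : ℕ) : ∑ n ∈ Finset.Ioc 0 N, (latticeR n : ℝ) ≤ 9 * N := by
  have h := card_gaussianBall_le N
  rw [card_eq_sum_ones, sum_gaussianShell] at h
  simp only [← card_eq_sum_ones, card_gaussianSphere] at h
  exact_mod_cast h

/-! ### The divisor identity for angular sums -/

lemma associated_of_dvd_of_norm_eq {a b : GaussianInt} (hab : a ∣ b) (ha : a ≠ 0)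
    (h : a.norm = b.norm) : Associated a b := by
  obtain ⟨u, rfl⟩ := hab
  rw [Zsqrtd.norm_mul] at h
  exact associated_mul_unit_right a u
    ((Zsqrtd.norm_eq_one_iff' (by decide) _).mp
      (mul_left_cancel₀ (GaussianInt.norm_pos.mpr ha).ne' (by omega)))

lemma exists_eq_mul_and_associated_mul_star {ζ ζ' : GaussianInt} (hζ : ζ ≠ 0)
    (h : ζ.norm = ζ'.norm) :
    ∃ g x : GaussianInt, ζ = g * x ∧ Associated ζ' (g * star x) ∧
      ∀ c, c ∣ ζ → c ∣ ζ' → c ∣ g := by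
  obtain ⟨x, hx⟩ := EuclideanDomain.gcd_dvd_left ζ ζ'
  obtain ⟨y, hy⟩ := EuclideanDomain.gcd_dvd_right ζ ζ'
  set g := EuclideanDomain.gcd ζ ζ' with hg
  have hg0 : g ≠ 0 := left_ne_zero_of_mul (hx ▸ hζ)
  have hx0 : x ≠ 0 := right_ne_zero_of_mul (hx ▸ hζ)
  have h_norm : x.norm = y.norm := by
    rw [hx, hy, Zsqrtd.norm_mul, Zsqrtd.norm_mul] at h
    exact mul_left_cancel₀ (GaussianInt.norm_pos.mpr hg0).ne' h
  have h_coprime : IsCoprime x y := by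
    refine ⟨EuclideanDomain.gcdA ζ ζ', EuclideanDomain.gcdB ζ ζ', mul_left_cancel₀ hg0 ?_⟩
    linear_combination EuclideanDomain.gcdA ζ ζ' * hx.symm + EuclideanDomain.gcdB ζ ζ' * hy.symm
      - EuclideanDomain.gcd_eq_gcd_ab ζ ζ'
  have h_dvd : x ∣ star y := h_coprime.dvd_of_dvd_mul_left
    ⟨star x, by rw [← Zsqrtd.norm_eq_mul_conj, ← Zsqrtd.norm_eq_mul_conj, h_norm]⟩
  have h_assoc : Associated (star x) y := by
    have := associated_of_dvd_of_norm_eq h_dvd hx0 (by rw [Zsqrtd.norm_conj, h_norm])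
    rw [← star_star y]
    exact this.map (starRingEnd GaussianInt)
  exact ⟨g, x, hx, hy ▸ (h_assoc.mul_left g).symm, fun c => EuclideanDomain.dvd_gcd⟩

lemma associated_mul_star_iff {ζ' g x c δ : GaussianInt} (hx : x ≠ 0)
    (hζ' : Associated ζ' (g * star x)) (hg : g = c * δ) (hc : c ≠ 0) :
    Associated (ζ' * star c) (star (g * x) * c) ↔ Associated δ (star δ) := by
  have h_left : Associated (ζ' * star c) (c * star c * star x * δ) := by
    have h_eq : c * star c * star x * δ = g * star x * star c := by rw [hg]; ring
    exact h_eq ▸ hζ'.mul_right (star c)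
  have h_right : star (g * x) * c = c * star c * star x * star δ := by
    rw [hg, star_mul, star_mul]
    ring
  have h_ne : c * star c * star x ≠ 0 := by simp [hc, hx]
  rw [h_right]
  exact ⟨fun h => (h_left.symm.trans h).of_mul_left (Associated.refl _) h_ne,
    fun h => h_left.trans (h.mul_left _)⟩

lemma sum_sum_filter_congr_card {α β E : Type*} [AddCommMonoid E] {s : Finset α} {t : Finset β}
    (R R' : α → β → Prop) [∀ a b, Decidable (R a b)] [∀ a b, Decidable (R' a b)] (w : β → E)
    (h : ∀ b ∈ t, #{a ∈ s | R a b} = #{a ∈ s | R' a b}) :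
    ∑ a ∈ s, ∑ b ∈ t with R a b, w b = ∑ a ∈ s, ∑ b ∈ t with R' a b, w b := by
  have h_swap : ∀ (R : α → β → Prop) [∀ a b, Decidable (R a b)],
      ∑ a ∈ s, ∑ b ∈ t with R a b, w b = ∑ b ∈ t, #{a ∈ s | R a b} • w b := fun R => by
    simp only [sum_filter, ← sum_const]
    exact sum_comm
  rw [h_swap, h_swap]
  exact sum_congr rfl fun b hb => by rw [h b hb]

lemma mem_gaussianShell_divisors_of_dvd {n : ℕ} (hn : 0 < n) {c ζ : GaussianInt} (hζ : ζ.norm = n)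
    (h : c ∣ ζ) : c ∈ gaussianShell n.divisors := by
  obtain ⟨d, rfl⟩ := h
  rw [Zsqrtd.norm_mul, ← Int.natAbs_of_nonneg (GaussianInt.norm_nonneg c)] at hζ
  exact mem_gaussianShell.mpr ⟨c.norm.natAbs,
    Nat.mem_divisors.mpr ⟨Int.natCast_dvd_natCast.mp ⟨_, hζ.symm⟩, hn.ne'⟩,
    (Int.natAbs_of_nonneg (GaussianInt.norm_nonneg c)).symm⟩

/- Writing `ζ = g x` and `ζ' ~ g x̄` with `g = gcd (ζ, ζ')`, the two sets of divisors of `g` are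
exchanged by the involution `c ↦ g / c`. -/
open Classical in
lemma card_twisted_common_divisors {n : ℕ} (hn : 0 < n) {ζ ζ' : GaussianInt} (hζ : ζ.norm = n)
    (hζ' : ζ'.norm = n) :
    #{c ∈ gaussianShell n.divisors | c ∣ ζ ∧ c ∣ ζ' ∧ Associated (ζ' * star c) (star ζ * c)} =
      #{δ ∈ gaussianShell n.divisors | Associated δ (star δ) ∧ δ ∣ ζ ∧ δ ∣ ζ'} := by
  have hζ0 : ζ ≠ 0 := GaussianInt.norm_pos.mp (by omega)
  obtain ⟨g, x, rfl, h_assoc, h_dvd⟩ :=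
    exists_eq_mul_and_associated_mul_star hζ0 (hζ.trans hζ'.symm)
  have hg0 : g ≠ 0 := left_ne_zero_of_mul hζ0
  have hx0 : x ≠ 0 := right_ne_zero_of_mul hζ0
  have h_common : ∀ {c}, c ∣ g ↔ c ∣ g * x ∧ c ∣ ζ' := fun {c} =>
    ⟨fun h => ⟨h.mul_right x, (h.mul_right _).trans h_assoc.symm.dvd⟩, fun h => h_dvd c h.1 h.2⟩
  have h_mem : ∀ {c}, c ∣ g → c ∈ gaussianShell n.divisors := fun h =>
    mem_gaussianShell_divisors_of_dvd hn hζ (h.mul_right x)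
  have h_quot : ∀ {c}, c ∣ g → g = c * (g / c) ∧ g = g / c * c ∧ g / (g / c) = c ∧ c ≠ 0 ∧
      g / c ≠ 0 := by
    rintro c ⟨d, rfl⟩
    have hc := left_ne_zero_of_mul hg0
    have hd := right_ne_zero_of_mul hg0
    rw [mul_div_cancel_left₀ d hc, mul_div_cancel_right₀ c hd]
    exact ⟨rfl, mul_comm _ _, rfl, hc, hd⟩
  refine card_nbij' (g / ·) (g / ·) (fun c hc => ?_) (fun δ hδ => ?_) (fun c hc => ?_)
    (fun δ hδ => ?_)
  · obtain ⟨-, h₁, h₂, h⟩ := mem_filter.mp hc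
    obtain ⟨h_eq, h_eq', -, hc0, -⟩ := h_quot (h_common.mpr ⟨h₁, h₂⟩)
    have h_div : g / c ∣ g := ⟨c, h_eq'⟩
    exact mem_filter.mpr ⟨h_mem h_div, (associated_mul_star_iff hx0 h_assoc h_eq hc0).mp h,
      h_common.mp h_div⟩
  · obtain ⟨-, h, h₁, h₂⟩ := mem_filter.mp hδ
    obtain ⟨-, h_eq, -, -, hδ0⟩ := h_quot (h_common.mpr ⟨h₁, h₂⟩)
    have h_div : g / δ ∣ g := ⟨δ, h_eq⟩
    exact mem_filter.mpr ⟨h_mem h_div, (h_common.mp h_div).1, (h_common.mp h_div).2,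
      (associated_mul_star_iff hx0 h_assoc h_eq hδ0).mpr h⟩
  · obtain ⟨-, h₁, h₂, -⟩ := mem_filter.mp hc
    exact (h_quot (h_common.mpr ⟨h₁, h₂⟩)).2.2.1
  · obtain ⟨-, -, h₁, h₂⟩ := mem_filter.mp hδ
    exact (h_quot (h_common.mpr ⟨h₁, h₂⟩)).2.2.1

lemma angularChar_mul_mul_conj (k : ℤ) {c x : GaussianInt} (hc : c ≠ 0) (hx : x ≠ 0)
    (u : GaussianInt) :
    angularChar k (c * x : GaussianInt) * conj (angularChar k (c * (u * star x) : GaussianInt)) =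
      conj (angularChar k u) * angularChar (2 * k) x := by
  have h_unit : angularChar k c * conj (angularChar k c) = 1 := by
    rw [Complex.mul_conj, Complex.normSq_eq_norm_sq, norm_angularChar k (by simpa using hc)]
    simp
  simp only [map_mul, GaussianInt.toComplex_star, angularChar_conj, Complex.conj_conj,
    angularChar_two_mul k (show (x : ℂ) ≠ 0 by simpa using hx)]
  linear_combination (angularChar k x * conj (angularChar k u) * angularChar k x) * h_unit

lemma associated_star_of_twisted {c x y : GaussianInt} (hc : c ≠ 0)
    (h : Associated (c * y * star c) (star (c * x) * c)) : Associated (star x) y := by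
  refine Associated.of_mul_left (a := c * star c) ?_ (Associated.refl _) (by simpa using hc)
  rw [star_mul] at h
  rw [show c * star c * star x = star x * star c * c by ring,
    show c * star c * y = c * y * star c by ring]
  exact h.symm

/- The pairs are exactly `(c x, c u x̄)` with `u` a unit and `|x|² = b`. -/
open Classical in
lemma sum_twisted_pairs {a b : ℕ} (hab : 0 < a * b) (k : ℤ) {c : GaussianInt} (hc : c.norm = a) :
    ∑ p ∈ gaussianSphere (a * b) ×ˢ gaussianSphere (a * b) with
        c ∣ p.1 ∧ c ∣ p.2 ∧ Associated (p.2 * star c) (star p.1 * c),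
      angularChar k p.1 * conj (angularChar k p.2) =
      conj (latticeS 1 k) * latticeS b (2 * k) := by
  have hb : 0 < b := Nat.pos_of_mul_pos_left hab
  have hc0 : c ≠ 0 := GaussianInt.norm_pos.mp (by have := Nat.pos_of_mul_pos_right hab; omega)
  rw [latticeS_eq_sum_angularChar one_pos, latticeS_eq_sum_angularChar hb, map_sum,
    sum_mul_sum, ← sum_product']
  symm
  refine sum_nbij (fun q => (c * q.2, c * (q.1 * star q.2))) ?_ ?_ ?_ ?_
  · rintro ⟨u, x⟩ hq
    simp only [mem_product, mem_gaussianSphere, Nat.cast_one] at hq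
    obtain ⟨hu, hx⟩ := hq
    simp only [mem_filter, mem_product, mem_gaussianSphere, Zsqrtd.norm_mul, Zsqrtd.norm_conj, hc,
      hx, hu]
    refine ⟨by push_cast; simp, dvd_mul_right _ _, dvd_mul_right _ _, ?_⟩
    rw [star_mul, show c * (u * star x) * star c = u * (star x * star c * c) by ring]
    exact associated_unit_mul_left _ u ((Zsqrtd.norm_eq_one_iff' (by decide) _).mp hu)
  · rintro ⟨u, x⟩ hq ⟨u', x'⟩ - h
    have hx : x ≠ 0 := ne_zero_of_mem_gaussianSphere hb (mem_product.mp hq).2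
    obtain ⟨h₁, h₂⟩ := Prod.mk.inj h
    obtain rfl : x = x' := mul_left_cancel₀ hc0 h₁
    obtain rfl : u = u' := mul_right_cancel₀ (star_ne_zero.mpr hx) (mul_left_cancel₀ hc0 h₂)
    rfl
  · rintro ⟨_, _⟩ hp
    simp only [coe_filter, mem_product, mem_gaussianSphere, Set.mem_ofPred_eq] at hp
    obtain ⟨⟨h₁, -⟩, ⟨x, rfl⟩, ⟨y, rfl⟩, h⟩ := hp
    have hx : x.norm = b := by
      rw [Zsqrtd.norm_mul, hc] at h₁
      push_cast at h₁
      exact mul_left_cancel₀ (by exact_mod_cast (Nat.pos_of_mul_pos_right hab).ne') h₁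
    obtain ⟨u, rfl⟩ := associated_star_of_twisted hc0 h
    exact ⟨(u, x), by simp [mem_gaussianSphere, hx, Zsqrtd.norm_eq_one_iff'], by simp [mul_comm]⟩
  · rintro ⟨u, x⟩ hq
    exact (angularChar_mul_mul_conj k hc0
      (ne_zero_of_mem_gaussianSphere hb (mem_product.mp hq).2) u).symm

lemma sum_filter_product_mul_conj {α : Type*} (s : Finset α) (P : α → Prop) [DecidablePred P]
    (f : α → ℂ) :
    ∑ p ∈ s ×ˢ s with P p.1 ∧ P p.2, f p.1 * conj (f p.2) = (‖∑ a ∈ s with P a, f a‖ ^ 2 : ℝ) := by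
  rw [← Complex.normSq_eq_norm_sq, ← Complex.mul_conj, map_sum, sum_mul_sum, filter_product,
    sum_product]

open Classical in
theorem conj_latticeS_one_mul_sum_divisorsAntidiagonal {n : ℕ} (hn : 0 < n) (k : ℤ) :
    conj (latticeS 1 k) * ∑ d ∈ n.divisorsAntidiagonal, latticeR d.1 * latticeS d.2 (2 * k) =
      (∑ δ ∈ gaussianShell n.divisors with Associated δ (star δ),
        ‖∑ ζ ∈ gaussianSphere n with δ ∣ ζ, angularChar k ζ‖ ^ 2 : ℝ) := by
  let w : GaussianInt × GaussianInt → ℂ := fun p => angularChar k p.1 * conj (angularChar k p.2)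
  let W : GaussianInt → ℂ := fun c => ∑ p ∈ gaussianSphere n ×ˢ gaussianSphere n with
    c ∣ p.1 ∧ c ∣ p.2 ∧ Associated (p.2 * star c) (star p.1 * c), w p
  calc conj (latticeS 1 k) * ∑ d ∈ n.divisorsAntidiagonal, latticeR d.1 * latticeS d.2 (2 * k)
      = ∑ c ∈ gaussianShell n.divisors, W c := by
        rw [sum_gaussianShell, mul_sum,
          ← Nat.sum_divisorsAntidiagonal fun a _ => ∑ c ∈ gaussianSphere a, W c]
        refine sum_congr rfl fun d hd => ?_
        obtain ⟨rfl, -⟩ := Nat.mem_divisorsAntidiagonal.mp hd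
        rw [sum_congr rfl fun c hc => sum_twisted_pairs hn k (mem_gaussianSphere.mp hc),
          sum_const, card_gaussianSphere, nsmul_eq_mul, mul_left_comm]
    _ = ∑ δ ∈ gaussianShell n.divisors, ∑ p ∈ gaussianSphere n ×ˢ gaussianSphere n with
          Associated δ (star δ) ∧ δ ∣ p.1 ∧ δ ∣ p.2, w p := by
        refine sum_sum_filter_congr_card (s := gaussianShell n.divisors)
          (t := gaussianSphere n ×ˢ gaussianSphere n)
          (fun c p => c ∣ p.1 ∧ c ∣ p.2 ∧ Associated (p.2 * star c) (star p.1 * c))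
          (fun δ p => Associated δ (star δ) ∧ δ ∣ p.1 ∧ δ ∣ p.2) w fun p hp => ?_
        obtain ⟨h₁, h₂⟩ := mem_product.mp hp
        exact card_twisted_common_divisors hn (mem_gaussianSphere.mp h₁) (mem_gaussianSphere.mp h₂)
    _ = _ := by
        rw [Complex.ofReal_sum, sum_filter]
        refine sum_congr rfl fun δ _ => ?_
        split_ifs with hδ
        · simp only [hδ, true_and]
          exact sum_filter_product_mul_conj (gaussianSphere n) (δ ∣ ·) fun ζ => angularChar k ζ
        · simp only [hδ, false_and, filter_false, sum_empty]

theorem norm_latticeS_sq_le {n : ℕ} (hn : 0 < n) (k : ℤ) :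
    ‖latticeS n k‖ ^ 2 ≤ (conj (latticeS 1 k) *
      ∑ d ∈ n.divisorsAntidiagonal, latticeR d.1 * latticeS d.2 (2 * k)).re := by
  classical
  rw [conj_latticeS_one_mul_sum_divisorsAntidiagonal hn, Complex.ofReal_re]
  have h_one : (1 : GaussianInt) ∈
      ({δ ∈ gaussianShell n.divisors | Associated δ (star δ)} : Finset GaussianInt) :=
    mem_filter.mpr ⟨mem_gaussianShell.mpr
      ⟨1, Nat.one_mem_divisors.mpr hn.ne', by rw [Zsqrtd.norm_one, Nat.cast_one]⟩, by rw [star_one]⟩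
  calc ‖latticeS n k‖ ^ 2
      = ‖∑ ζ ∈ gaussianSphere n with (1 : GaussianInt) ∣ ζ, angularChar k ζ‖ ^ 2 := by
        rw [filter_true_of_mem fun ζ _ => one_dvd ζ, latticeS_eq_sum_angularChar hn]
    _ ≤ _ := single_le_sum (f := fun δ : GaussianInt =>
        ‖∑ ζ ∈ gaussianSphere n with δ ∣ ζ, angularChar k ζ‖ ^ 2) (fun δ _ => sq_nonneg _) h_one

/-! ### Sums weighted by the number of representations -/

lemma sum_mul_le_sum_mul_of_antitone {a b f : ℕ → ℝ}
    (hab : ∀ N, ∑ n ∈ Finset.Ioc 0 N, a n ≤ ∑ n ∈ Finset.Ioc 0 N, b n)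
    (hf : AntitoneOn f (Set.Ioi 0)) (hf0 : ∀ n, 0 ≤ f n) (N : ℕ) :
    ∑ n ∈ Finset.Ioc 0 N, a n * f n ≤ ∑ n ∈ Finset.Ioc 0 N, b n * f n := by
  suffices h : (∑ n ∈ Finset.Ioc 0 N, (b n - a n)) * f N ≤
      ∑ n ∈ Finset.Ioc 0 N, (b n - a n) * f n by
    have h_nonneg := mul_nonneg (sub_nonneg.mpr (hab N)) (hf0 N)
    rw [← sum_sub_distrib] at h_nonneg
    have := h_nonneg.trans h
    simp only [sub_mul, sum_sub_distrib] at this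
    linarith
  induction N with
  | zero => simp
  | succ N ih =>
    rw [sum_Ioc_succ_top N.zero_le, sum_Ioc_succ_top N.zero_le, add_mul]
    gcongr
    refine le_trans ?_ ih
    obtain rfl | hN := N.eq_zero_or_pos
    · simp
    · have h_diff : 0 ≤ ∑ n ∈ Finset.Ioc 0 N, (b n - a n) := by
        rw [sum_sub_distrib]
        exact sub_nonneg.mpr (hab N)
      exact mul_le_mul_of_nonneg_left (hf hN N.succ_pos N.le_succ) h_diff

lemma sum_inv_sqrt_le (N : ℕ) : ∑ n ∈ Finset.Ioc 0 N, (√(n : ℝ))⁻¹ ≤ 2 * √(N : ℝ) := by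
  induction N with
  | zero => simp
  | succ N ih =>
    have h_pos : 0 < √((N : ℝ) + 1) := by positivity
    have h_sq := Real.sq_sqrt (show (0 : ℝ) ≤ N + 1 by positivity)
    have h_sq' := Real.sq_sqrt (show (0 : ℝ) ≤ N by positivity)
    have h_step : (√((N : ℝ) + 1))⁻¹ ≤ 2 * (√((N : ℝ) + 1) - √(N : ℝ)) := by
      rw [inv_le_iff_one_le_mul₀ h_pos]
      nlinarith [sq_nonneg (√((N : ℝ) + 1) - √(N : ℝ))]
    rw [sum_Ioc_succ_top N.zero_le]
    push_cast
    linarith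

lemma sum_latticeR_mul_inv_sqrt_le (N : ℕ) :
    ∑ n ∈ Finset.Ioc 0 N, latticeR n * (√(n : ℝ))⁻¹ ≤ 18 * √(N : ℝ) := by
  have h_anti : AntitoneOn (fun n : ℕ => (√(n : ℝ))⁻¹) (Set.Ioi 0) := fun m hm n _ hmn =>
    inv_anti₀ (Real.sqrt_pos.mpr (Nat.cast_pos.mpr hm)) (Real.sqrt_le_sqrt (Nat.cast_le.mpr hmn))
  have h_le := sum_mul_le_sum_mul_of_antitone (a := fun n => (latticeR n : ℝ)) (b := fun _ => 9)
    (fun N => (sum_latticeR_le N).trans_eq (by simp [mul_comm])) h_anti (fun n => by positivity) N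
  calc _ ≤ _ := h_le
    _ = 9 * ∑ n ∈ Finset.Ioc 0 N, (√(n : ℝ))⁻¹ := by rw [mul_sum]
    _ ≤ 18 * √(N : ℝ) := by linarith [sum_inv_sqrt_le N]

/-! ### Lattice sums as integrals -/

/-- The Gaussian integer `ζ` whose cell `hζ + [0, h)²` contains `z`. -/
noncomputable def latticeFloor (h : ℝ) (z : ℂ) : GaussianInt := ⟨⌊z.re / h⌋, ⌊z.im / h⌋⟩

lemma abs_sub_mul_floor_div_le {h : ℝ} (hh : 0 < h) (x : ℝ) : |x - h * ⌊x / h⌋| ≤ h := by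
  have h_eq : x - h * ⌊x / h⌋ = h * Int.fract (x / h) := by
    rw [Int.fract, mul_sub, mul_div_cancel₀ x hh.ne']
  rw [h_eq, abs_of_nonneg (mul_nonneg hh.le (Int.fract_nonneg _))]
  exact mul_le_of_le_one_right hh.le (Int.fract_lt_one _).le

lemma norm_sub_latticeFloor_le {h : ℝ} (hh : 0 < h) (z : ℂ) :
    ‖z - h * (latticeFloor h z : ℂ)‖ ≤ 2 * h := by
  calc ‖z - h * (latticeFloor h z : ℂ)‖
      ≤ |z.re - h * ⌊z.re / h⌋| + |z.im - h * ⌊z.im / h⌋| := by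
        simpa [latticeFloor, GaussianInt.toComplex_def] using
          Complex.norm_le_abs_re_add_abs_im (z - h * (latticeFloor h z : ℂ))
    _ ≤ h + h := add_le_add (abs_sub_mul_floor_div_le hh _) (abs_sub_mul_floor_div_le hh _)
    _ = 2 * h := by ring

lemma latticeFloor_preimage_singleton {h : ℝ} (hh : 0 < h) (ζ : GaussianInt) :
    latticeFloor h ⁻¹' {ζ} = Complex.measurableEquivRealProd ⁻¹'
      (Set.Ico (h * ζ.re) (h * (ζ.re + 1)) ×ˢ Set.Ico (h * ζ.im) (h * (ζ.im + 1))) := by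
  ext z
  simp only [latticeFloor, Set.mem_preimage, Set.mem_singleton_iff, Zsqrtd.ext_iff, Set.mem_prod,
    Set.mem_Ico, Complex.measurableEquivRealProd_apply, Int.floor_eq_iff, le_div_iff₀ hh,
    div_lt_iff₀ hh, mul_comm h]

lemma measurableSet_latticeFloor_preimage {h : ℝ} (hh : 0 < h) (ζ : GaussianInt) :
    MeasurableSet (latticeFloor h ⁻¹' {ζ}) := by
  rw [latticeFloor_preimage_singleton hh]
  exact Complex.measurableEquivRealProd.measurable (measurableSet_Ico.prod measurableSet_Ico)

lemma volume_latticeFloor_preimage {h : ℝ} (hh : 0 < h) (ζ : GaussianInt) :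
    volume (latticeFloor h ⁻¹' {ζ}) = ENNReal.ofReal (h ^ 2) := by
  rw [latticeFloor_preimage_singleton hh,
    Complex.volume_preserving_equiv_real_prod.measure_preimage
      (measurableSet_Ico.prod measurableSet_Ico).nullMeasurableSet,
    Measure.volume_eq_prod, Measure.prod_prod, Real.volume_Ico, Real.volume_Ico,
    ← ENNReal.ofReal_mul (by nlinarith)]
  ring_nf

section CompLatticeFloor

variable {E : Type*} [NormedAddCommGroup E] {h : ℝ} {s : Finset GaussianInt} {f : GaussianInt → E}

lemma comp_latticeFloor_eq_sum_indicator (hf : ∀ ζ ∉ s, f ζ = 0) :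
    (fun z => f (latticeFloor h z)) =
      fun z => ∑ ζ ∈ s, (latticeFloor h ⁻¹' {ζ}).indicator (fun _ => f ζ) z := by
  classical
  funext z
  simp only [Set.indicator_apply, Set.mem_preimage, Set.mem_singleton_iff, sum_ite_eq]
  split_ifs with hz
  · rfl
  · exact hf _ hz

lemma integrable_indicator_latticeFloor_preimage (hh : 0 < h) (ζ : GaussianInt) (c : E) :
    Integrable ((latticeFloor h ⁻¹' {ζ}).indicator fun _ => c) :=
  (integrable_indicator_iff (measurableSet_latticeFloor_preimage hh ζ)).mpr
    (integrableOn_const (volume_latticeFloor_preimage hh ζ ▸ ENNReal.ofReal_ne_top))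

lemma integrable_comp_latticeFloor (hh : 0 < h) (hf : ∀ ζ ∉ s, f ζ = 0) :
    Integrable fun z => f (latticeFloor h z) := by
  rw [comp_latticeFloor_eq_sum_indicator hf]
  exact integrable_finsetSum _ fun ζ _ => integrable_indicator_latticeFloor_preimage hh ζ _

lemma integral_comp_latticeFloor [NormedSpace ℝ E] [CompleteSpace E] (hh : 0 < h)
    (hf : ∀ ζ ∉ s, f ζ = 0) : ∫ z, f (latticeFloor h z) = h ^ 2 • ∑ ζ ∈ s, f ζ := by
  rw [comp_latticeFloor_eq_sum_indicator hf, integral_finsetSum _ fun ζ _ =>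
    integrable_indicator_latticeFloor_preimage hh ζ _, smul_sum]
  refine sum_congr rfl fun ζ _ => ?_
  rw [integral_indicator_const _ (measurableSet_latticeFloor_preimage hh ζ), measureReal_def,
    volume_latticeFloor_preimage hh, ENNReal.toReal_ofReal (sq_nonneg h)]

lemma integrable_indicator_comp_latticeFloor (hh : 0 < h) (s : Finset GaussianInt)
    (f : GaussianInt → E) :
    Integrable fun z => (s : Set GaussianInt).indicator f (latticeFloor h z) :=
  integrable_comp_latticeFloor hh fun _ hζ => Set.indicator_of_notMem (mem_coe.not.mpr hζ) f

lemma integral_indicator_comp_latticeFloor [NormedSpace ℝ E] [CompleteSpace E] (hh : 0 < h)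
    (s : Finset GaussianInt) (f : GaussianInt → E) :
    ∫ z, (s : Set GaussianInt).indicator f (latticeFloor h z) = h ^ 2 • ∑ ζ ∈ s, f ζ := by
  rw [integral_comp_latticeFloor hh fun _ hζ => Set.indicator_of_notMem (mem_coe.not.mpr hζ) f]
  exact congrArg _ (sum_congr rfl fun _ hζ => Set.indicator_of_mem (mem_coe.mpr hζ) f)

end CompLatticeFloor

/-! ### Angular sums over balls -/

lemma mem_gaussianBall_iff_norm_le {N : ℕ} {ζ : GaussianInt} :
    ζ ∈ gaussianBall N ↔ ζ ≠ 0 ∧ ‖(ζ : ℂ)‖ ≤ √(N : ℝ) := by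
  rw [mem_gaussianBall, Real.le_sqrt (norm_nonneg _) N.cast_nonneg, norm_toComplex_sq]
  norm_cast

lemma integrable_indicator_closedBall_angularChar {k : ℤ} (hk : k ≠ 0) (ρ : ℝ) :
    Integrable ((Metric.closedBall 0 ρ).indicator (angularChar k)) :=
  (integrable_indicator_iff measurableSet_closedBall).mpr <|
    Measure.integrableOn_of_bounded (isCompact_closedBall 0 ρ).measure_lt_top.ne
      (measurable_angularChar k).aestronglyMeasurable
      (Eventually.of_forall (norm_angularChar_le_one hk))

/- The rotation by `π / k` multiplies the character by `-1`. -/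
lemma integral_indicator_closedBall_angularChar {k : ℤ} (hk : k ≠ 0) (ρ : ℝ) :
    ∫ z, (Metric.closedBall 0 ρ).indicator (angularChar k) z = 0 := by
  classical
  set χ := (Metric.closedBall 0 ρ).indicator (angularChar k)
  set a : Circle := Circle.exp (Real.pi / k)
  have ha : angularChar k a = -1 := by
    rw [Circle.coe_exp, angularChar_exp, ← Complex.exp_pi_mul_I]
    congr 1
    push_cast
    rw [mul_div_cancel₀ _ (Int.cast_ne_zero.mpr hk)]
  have h_rotate : ∀ z, χ (rotation a z) = -χ z := fun z => by
    simp only [χ, Set.indicator_apply, mem_closedBall_zero_iff,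
      rotation_apply, norm_mul, Circle.norm_coe, one_mul, map_mul, ha]
    split_ifs <;> simp
  have h_inv := (rotation a).measurePreserving.integral_comp
    (rotation a).toHomeomorph.measurableEmbedding χ
  simp only [h_rotate, integral_neg] at h_inv
  exact self_eq_neg.mp h_inv.symm

lemma volume_real_closedBall {r : ℝ} (hr : 0 ≤ r) :
    volume.real (Metric.closedBall (0 : ℂ) r) = Real.pi * r ^ 2 := by
  simp [measureReal_def, Complex.volume_closedBall, ENNReal.toReal_ofReal hr, mul_comm]

lemma volume_real_closedBall_diff_le {ρ : ℝ} (hρ : 1 ≤ ρ) :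
    volume.real (Metric.closedBall (0 : ℂ) (ρ + 2) \ Metric.closedBall 0 (ρ - 2)) ≤
      16 * Real.pi * ρ := by
  have hπ := Real.pi_pos
  obtain hρ2 | hρ2 := lt_or_ge ρ 2
  · refine (measureReal_mono Set.sdiff_subset
      (isCompact_closedBall _ _).measure_lt_top.ne).trans ?_
    rw [volume_real_closedBall (by linarith)]
    nlinarith [mul_nonneg hπ.le (mul_nonneg (sub_nonneg.mpr hρ) (sub_nonneg.mpr hρ2.le))]
  · rw [measureReal_sdiff (Metric.closedBall_subset_closedBall (by linarith))
      measurableSet_closedBall (isCompact_closedBall _ _).measure_lt_top.ne,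
      volume_real_closedBall (by linarith), volume_real_closedBall (by linarith)]
    nlinarith

/-- The region where an angular sum over the ball of radius `ρ` is compared trivially with the
integral: points close to the origin or to the boundary circle. -/
def exceptionalSet (ρ : ℝ) : Set ℂ :=
  Metric.closedBall 0 2 ∪ Metric.closedBall 0 (ρ + 2) \ Metric.closedBall 0 (ρ - 2)

lemma measurableSet_exceptionalSet (ρ : ℝ) : MeasurableSet (exceptionalSet ρ) :=
  measurableSet_closedBall.union (measurableSet_closedBall.diff measurableSet_closedBall)

lemma volume_exceptionalSet_ne_top (ρ : ℝ) : volume (exceptionalSet ρ) ≠ ⊤ :=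
  ((Metric.isBounded_closedBall.union
    (Metric.isBounded_closedBall.subset Set.sdiff_subset)).measure_lt_top).ne

lemma volume_real_exceptionalSet_le {ρ : ℝ} (hρ : 1 ≤ ρ) :
    volume.real (exceptionalSet ρ) ≤ 20 * Real.pi * ρ := by
  have hπ := Real.pi_pos
  refine (measureReal_union_le _ _).trans ?_
  rw [volume_real_closedBall zero_le_two]
  nlinarith [volume_real_closedBall_diff_le hρ]

lemma norm_angularChar_latticeFloor_sub_le {k : ℤ} (hk : k ≠ 0) (N : ℕ) (z : ℂ) :
    ‖(gaussianBall N : Set GaussianInt).indicator (fun ζ => angularChar k ζ) (latticeFloor 1 z) -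
        (Metric.closedBall 0 √(N : ℝ)).indicator (angularChar k) z‖ ≤
      (gaussianBall N : Set GaussianInt).indicator (fun ζ => 4 * |(k : ℝ)| * ‖(ζ : ℂ)‖⁻¹)
          (latticeFloor 1 z) +
        (exceptionalSet √(N : ℝ)).indicator (fun _ => 2) z := by
  set ζ := latticeFloor 1 z
  set ρ := √(N : ℝ)
  have h_dist : ‖(ζ : ℂ) - z‖ ≤ 2 := by
    rw [norm_sub_rev]
    simpa using norm_sub_latticeFloor_le one_pos z
  have h_upper : ‖(ζ : ℂ)‖ ≤ ‖z‖ + 2 := by linarith [norm_le_norm_add_norm_sub' (ζ : ℂ) z]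
  have h_lower : ‖z‖ ≤ ‖(ζ : ℂ)‖ + 2 := by
    linarith [norm_le_norm_add_norm_sub' z (ζ : ℂ), norm_sub_rev z (ζ : ℂ)]
  have h_nonneg : 0 ≤ (gaussianBall N : Set GaussianInt).indicator
      (fun ζ => 4 * |(k : ℝ)| * ‖(ζ : ℂ)‖⁻¹) ζ :=
    Set.indicator_nonneg (fun _ _ => by positivity) _
  by_cases hz : z ∈ exceptionalSet ρ
  · rw [Set.indicator_of_mem hz]
    have h_disc := (norm_indicator_le_norm_self (s := (gaussianBall N : Set GaussianInt))
      (fun ζ => angularChar k ζ) ζ).trans (norm_angularChar_le_one hk _)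
    have h_cont := (norm_indicator_le_norm_self (s := Metric.closedBall 0 ρ)
      (angularChar k) z).trans (norm_angularChar_le_one hk _)
    linarith [norm_sub_le_of_le h_disc h_cont]
  rw [Set.indicator_of_notMem hz, add_zero]
  simp only [exceptionalSet, Set.mem_union, Set.mem_sdiff, mem_closedBall_zero_iff] at hz
  push Not at hz
  obtain ⟨hz2, hz⟩ := hz
  by_cases hzρ : ‖z‖ ≤ ρ + 2
  · have hzρ' : ‖z‖ ≤ ρ - 2 := hz hzρ
    have hζ0 : (ζ : ℂ) ≠ 0 := norm_pos_iff.mp (by linarith)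
    have hz0 : z ≠ 0 := norm_pos_iff.mp (by linarith)
    have hζ : ζ ∈ (gaussianBall N : Set GaussianInt) :=
      mem_gaussianBall_iff_norm_le.mpr ⟨by simpa using hζ0, by linarith⟩
    rw [Set.indicator_of_mem hζ, Set.indicator_of_mem hζ,
      Set.indicator_of_mem (mem_closedBall_zero_iff.mpr (by linarith))]
    refine (norm_angularChar_sub_le k hζ0 hz0).trans ?_
    rw [div_eq_mul_inv]
    nlinarith [mul_nonneg (abs_nonneg (k : ℝ)) (inv_nonneg.mpr (norm_nonneg (ζ : ℂ)))]
  · rwa [Set.indicator_of_notMem, Set.indicator_of_notMem, sub_zero, norm_zero]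
    · exact fun h => hzρ (by linarith [mem_closedBall_zero_iff.mp h])
    · exact fun h => hzρ (by linarith [(mem_gaussianBall_iff_norm_le.mp h).2])

lemma sum_gaussianBall_inv_norm_le (N : ℕ) :
    ∑ ζ ∈ gaussianBall N, ‖(ζ : ℂ)‖⁻¹ ≤ 18 * √(N : ℝ) := by
  refine le_of_eq_of_le ?_ (sum_latticeR_mul_inv_sqrt_le N)
  rw [sum_gaussianShell]
  refine sum_congr rfl fun n _ => ?_
  have h_norm : ∀ ζ ∈ gaussianSphere n, ‖(ζ : ℂ)‖⁻¹ = (√(n : ℝ))⁻¹ := fun ζ hζ => by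
    rw [← Real.sqrt_sq (norm_nonneg (ζ : ℂ)), norm_toComplex_sq, mem_gaussianSphere.mp hζ,
      Int.cast_natCast]
  rw [sum_congr rfl h_norm, sum_const, card_gaussianSphere, nsmul_eq_mul]

theorem norm_sum_gaussianBall_angularChar_le {k : ℤ} (hk : k ≠ 0) (N : ℕ) :
    ‖∑ ζ ∈ gaussianBall N, angularChar k (ζ : ℂ)‖ ≤
      (72 * |(k : ℝ)| + 40 * Real.pi) * √(N : ℝ) := by
  obtain rfl | hN := N.eq_zero_or_pos
  · simp [gaussianShell]
  set ρ := √(N : ℝ)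
  have hρ : 1 ≤ ρ := Real.one_le_sqrt.mpr (by exact_mod_cast hN)
  set B := (gaussianBall N : Set GaussianInt)
  have h_int : Integrable ((exceptionalSet ρ).indicator fun _ => (2 : ℝ)) :=
    (integrable_indicator_iff (measurableSet_exceptionalSet ρ)).mpr
      (integrableOn_const (volume_exceptionalSet_ne_top ρ))
  have h_int' := integrable_indicator_comp_latticeFloor one_pos (gaussianBall N)
    fun ζ => 4 * |(k : ℝ)| * ‖(ζ : ℂ)‖⁻¹
  calc ‖∑ ζ ∈ gaussianBall N, angularChar k (ζ : ℂ)‖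
      = ‖∫ z, (B.indicator (fun ζ => angularChar k ζ) (latticeFloor 1 z) -
          (Metric.closedBall 0 ρ).indicator (angularChar k) z)‖ := by
        rw [integral_sub (integrable_indicator_comp_latticeFloor one_pos _ _)
          (integrable_indicator_closedBall_angularChar hk ρ),
          integral_indicator_closedBall_angularChar hk, sub_zero,
          integral_indicator_comp_latticeFloor one_pos, one_pow, one_smul]
    _ ≤ ∫ z, (B.indicator (fun ζ => 4 * |(k : ℝ)| * ‖(ζ : ℂ)‖⁻¹) (latticeFloor 1 z) +
          (exceptionalSet ρ).indicator (fun _ => 2) z) :=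
        norm_integral_le_of_norm_le (h_int'.add h_int)
          (Eventually.of_forall (norm_angularChar_latticeFloor_sub_le hk N))
    _ = 4 * |(k : ℝ)| * ∑ ζ ∈ gaussianBall N, ‖(ζ : ℂ)‖⁻¹ +
          volume.real (exceptionalSet ρ) * 2 := by
        rw [integral_add h_int' h_int, integral_indicator_comp_latticeFloor one_pos, one_pow,
          one_smul, ← mul_sum,
          integral_indicator_const _ (measurableSet_exceptionalSet ρ), smul_eq_mul]
    _ ≤ 4 * |(k : ℝ)| * (18 * ρ) + 20 * Real.pi * ρ * 2 := by
        gcongr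
        · exact sum_gaussianBall_inv_norm_le N
        · exact volume_real_exceptionalSet_le hρ
    _ = (72 * |(k : ℝ)| + 40 * Real.pi) * ρ := by ring

/-! ### The second moment of the angular sums -/

lemma norm_sum_latticeS_le {k : ℤ} (hk : k ≠ 0) (N : ℕ) :
    ‖∑ n ∈ Finset.Ioc 0 N, latticeS n k‖ ≤ (72 * |(k : ℝ)| + 40 * Real.pi) * √(N : ℝ) := by
  rw [sum_congr rfl fun n hn => latticeS_eq_sum_angularChar (Finset.mem_Ioc.mp hn).1 k,
    ← sum_gaussianShell (Finset.Ioc 0 N) fun ζ => angularChar k (ζ : ℂ)]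
  exact norm_sum_gaussianBall_angularChar_le hk N

lemma sum_Ioc_sum_divisorsAntidiagonal {R : Type*} [Semiring R] (f g : ℕ → R) (N : ℕ) :
    ∑ n ∈ Finset.Ioc 0 N, ∑ d ∈ n.divisorsAntidiagonal, f d.1 * g d.2 =
      ∑ a ∈ Finset.Ioc 0 N, f a * ∑ b ∈ Finset.Ioc 0 (N / a), g b := by
  let toArith (f : ℕ → R) : ArithmeticFunction R := ⟨fun n => if n = 0 then 0 else f n, if_pos rfl⟩
  have h_apply : ∀ (f : ℕ → R) {n : ℕ}, n ≠ 0 → toArith f n = f n := fun f n hn => if_neg hn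
  have h_sum := ArithmeticFunction.sum_Ioc_mul_eq_sum_sum (toArith f) (toArith g) N
  simp only [ArithmeticFunction.mul_apply] at h_sum
  convert h_sum using 1
  · refine sum_congr rfl fun n _ => sum_congr rfl fun d hd => ?_
    rw [h_apply f (Nat.ne_zero_of_mem_divisorsAntidiagonal hd).1,
      h_apply g (Nat.ne_zero_of_mem_divisorsAntidiagonal hd).2]
  · refine sum_congr rfl fun a ha => ?_
    rw [h_apply f (Finset.mem_Ioc.mp ha).1.ne']
    congr 1
    exact sum_congr rfl fun b hb => (h_apply g (Finset.mem_Ioc.mp hb).1.ne').symm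

lemma norm_latticeR_mul_sum_latticeS_le {k : ℤ} (hk : k ≠ 0) (a N : ℕ) :
    ‖(latticeR a : ℂ) * ∑ b ∈ Finset.Ioc 0 (N / a), latticeS b k‖ ≤
      (72 * |(k : ℝ)| + 40 * Real.pi) * √(N : ℝ) * (latticeR a * (√(a : ℝ))⁻¹) := by
  rw [norm_mul, Complex.norm_natCast]
  calc latticeR a * ‖∑ b ∈ Finset.Ioc 0 (N / a), latticeS b k‖
      ≤ latticeR a * ((72 * |(k : ℝ)| + 40 * Real.pi) * √((N / a : ℕ) : ℝ)) := by
        gcongr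
        exact norm_sum_latticeS_le hk _
    _ ≤ latticeR a * ((72 * |(k : ℝ)| + 40 * Real.pi) * √((N : ℝ) / a)) := by
        gcongr
        exact Nat.cast_div_le
    _ = (72 * |(k : ℝ)| + 40 * Real.pi) * √(N : ℝ) * (latticeR a * (√(a : ℝ))⁻¹) := by
        rw [Real.sqrt_div N.cast_nonneg]
        ring

theorem exists_sum_norm_latticeS_sq_le {k : ℤ} (hk : k ≠ 0) :
    ∃ C : ℝ, ∀ N : ℕ, ∑ n ∈ Finset.Ioc 0 N, ‖latticeS n k‖ ^ 2 ≤ C * N := by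
  set B : ℝ := 72 * |((2 * k : ℤ) : ℝ)| + 40 * Real.pi
  have : 0 ≤ B := by positivity
  refine ⟨‖latticeS 1 k‖ * (B * 18), fun N => ?_⟩
  calc ∑ n ∈ Finset.Ioc 0 N, ‖latticeS n k‖ ^ 2
      ≤ ∑ n ∈ Finset.Ioc 0 N, (conj (latticeS 1 k) *
          ∑ d ∈ n.divisorsAntidiagonal, latticeR d.1 * latticeS d.2 (2 * k)).re :=
        sum_le_sum fun n hn => norm_latticeS_sq_le (Finset.mem_Ioc.mp hn).1 k
    _ = (conj (latticeS 1 k) * ∑ a ∈ Finset.Ioc 0 N,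
          latticeR a * ∑ b ∈ Finset.Ioc 0 (N / a), latticeS b (2 * k)).re := by
        rw [← Complex.re_sum, ← mul_sum,
          sum_Ioc_sum_divisorsAntidiagonal (fun a => (latticeR a : ℂ)) fun b => latticeS b (2 * k)]
    _ ≤ ‖latticeS 1 k‖ * ∑ a ∈ Finset.Ioc 0 N,
          ‖(latticeR a : ℂ) * ∑ b ∈ Finset.Ioc 0 (N / a), latticeS b (2 * k)‖ := by
        refine (Complex.re_le_norm _).trans ?_
        rw [norm_mul, RCLike.norm_conj]
        gcongr
        exact norm_sum_le _ _
    _ ≤ ‖latticeS 1 k‖ * (B * √(N : ℝ) * ∑ a ∈ Finset.Ioc 0 N, latticeR a * (√(a : ℝ))⁻¹) := by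
        rw [mul_sum (Finset.Ioc 0 N) _ (B * √(N : ℝ))]
        gcongr
        exact norm_latticeR_mul_sum_latticeS_le (mul_ne_zero two_ne_zero hk) _ N
    _ ≤ ‖latticeS 1 k‖ * (B * √(N : ℝ) * (18 * √(N : ℝ))) := by
        gcongr
        exact sum_latticeR_mul_inv_sqrt_le N
    _ = ‖latticeS 1 k‖ * (B * 18) * N := by
        linear_combination
          (‖latticeS 1 k‖ * B * 18) * Real.mul_self_sqrt (N.cast_nonneg : (0 : ℝ) ≤ N)

/-! ### Primes in residue classes -/

section PrimesInResidueClass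

open ArithmeticFunction.vonMangoldt

variable {q : ℕ} (a : ZMod q)

lemma residueClass_mul_rpow_le {u : ℝ} (hu : 0 < u) (hu1 : u ≤ 1) (n : ℕ) :
    u * (residueClass a n / (n : ℝ) ^ (1 + u)) ≤ (if n.Prime then 0 else residueClass a n) / n +
      {p : ℕ | p.Prime ∧ (p : ZMod q) = a}.indicator (fun n => 1 / (n : ℝ)) n := by
  have h_indicator := Set.indicator_nonneg (s := {p : ℕ | p.Prime ∧ (p : ZMod q) = a})
    (f := fun n => 1 / (n : ℝ)) (fun _ _ => by positivity) n
  obtain rfl | hn := n.eq_zero_or_pos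
  · simpa using h_indicator
  have hn0 : (0 : ℝ) < n := Nat.cast_pos.mpr hn
  have h_res := residueClass_nonneg a n
  have h_rpow : (n : ℝ) ^ (1 + u) = n * Real.exp (u * Real.log n) := by
    rw [Real.rpow_add hn0, Real.rpow_one, Real.rpow_def_of_pos hn0, mul_comm u]
  have h_exp : 1 ≤ Real.exp (u * Real.log n) :=
    Real.one_le_exp (mul_nonneg hu.le (Real.log_natCast_nonneg n))
  rw [h_rpow]
  by_cases hp : n.Prime
  · rw [if_pos hp, zero_div, zero_add]
    by_cases hna : (n : ZMod q) = a
    · rw [Set.indicator_of_mem (show n ∈ {p : ℕ | p.Prime ∧ (p : ZMod q) = a} from ⟨hp, hna⟩),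
        ← mul_div_assoc, div_le_div_iff₀ (by positivity) hn0, one_mul, mul_comm]
      have h_log : residueClass a n ≤ Real.log n :=
        (residueClass_le a n).trans_eq (ArithmeticFunction.vonMangoldt_apply_prime hp)
      gcongr
      linarith [mul_le_mul_of_nonneg_left h_log hu.le, Real.add_one_le_exp (u * Real.log n)]
    · rwa [residueClass, Set.indicator_of_notMem (s := {n : ℕ | (n : ZMod q) = a}) hna, zero_div,
        mul_zero]
  · rw [if_neg hp, Set.indicator_of_notMem (fun h => hp h.1), add_zero]
    calc u * (residueClass a n / (n * Real.exp (u * Real.log n)))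
        ≤ 1 * (residueClass a n / (n * 1)) := by gcongr
      _ = residueClass a n / n := by ring

lemma tendsto_mul_residueClass_div_rpow (n : ℕ) :
    Tendsto (fun u : ℝ => u * (residueClass a n / (n : ℝ) ^ (1 + u))) (𝓝[>] 0) (𝓝 0) := by
  obtain rfl | hn := n.eq_zero_or_pos
  · simp
  have hn0 : (n : ℝ) ≠ 0 := Nat.cast_ne_zero.mpr hn.ne'
  have h_cont : Continuous fun u : ℝ => u * (residueClass a n / (n : ℝ) ^ (1 + u)) :=
    continuous_id.mul <| continuous_const.div
      ((Real.continuous_const_rpow hn0).comp (continuous_const.add continuous_id))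
      fun u => (Real.rpow_pos_of_pos (Nat.cast_pos.mpr hn) _).ne'
  exact (h_cont.tendsto' 0 0 (zero_mul _)).mono_left nhdsWithin_le_nhds

/- If the sum converged, then `(x - 1) ∑ Λ(n) n⁻ˣ` over the class would tend to `0` as `x → 1⁺`
by dominated convergence, as `y exp (-y) ≤ 1`; but its limit is `1 / φ(q)`. -/
theorem not_summable_one_div_on_primes_residueClass [NeZero q] {a : ZMod q} (ha : IsUnit a) :
    ¬ Summable ({p : ℕ | p.Prime ∧ (p : ZMod q) = a}.indicator fun n => 1 / (n : ℝ)) := by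
  intro h_sum
  obtain ⟨C, hC⟩ := LSeries_residueClass_lower_bound ha
  have h_unit : ∀ᶠ u : ℝ in 𝓝[>] 0, u ∈ Set.Ioc (0 : ℝ) 1 := Ioc_mem_nhdsGT one_pos
  have h_bound : ∀ {u : ℝ}, u ∈ Set.Ioc (0 : ℝ) 1 → ∀ n : ℕ,
      ‖u * (residueClass a n / (n : ℝ) ^ (1 + u))‖ ≤
        (if n.Prime then 0 else residueClass a n) / n +
          {p : ℕ | p.Prime ∧ (p : ZMod q) = a}.indicator (fun n => 1 / (n : ℝ)) n := by
    intro u hu n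
    rw [Real.norm_of_nonneg (mul_nonneg hu.1.le
      (div_nonneg (residueClass_nonneg a n) (Real.rpow_nonneg n.cast_nonneg _)))]
    exact residueClass_mul_rpow_le a hu.1 hu.2 n
  have h_zero : Tendsto (fun u : ℝ => ∑' n : ℕ, u * (residueClass a n / (n : ℝ) ^ (1 + u)))
      (𝓝[>] 0) (𝓝 0) := by
    simpa only [tsum_zero] using tendsto_tsum_of_dominated_convergence
      ((summable_residueClass_non_primes_div a).add h_sum)
      (tendsto_mul_residueClass_div_rpow a) (h_unit.mono fun u hu n => h_bound hu n)
  have h_lower : ∀ᶠ u : ℝ in 𝓝[>] 0,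
      (q.totient : ℝ)⁻¹ - u * C ≤ ∑' n : ℕ, u * (residueClass a n / (n : ℝ) ^ (1 + u)) := by
    refine h_unit.mono fun u hu => ?_
    have h := mul_le_mul_of_nonneg_left
      (hC (x := 1 + u) ⟨by linarith [hu.1], by linarith [hu.2]⟩) hu.1.le
    rwa [add_sub_cancel_left, mul_sub, mul_div_cancel₀ _ hu.1.ne', ← tsum_mul_left] at h
  have h_limit : Tendsto (fun u : ℝ => (q.totient : ℝ)⁻¹ - u * C) (𝓝[>] 0)
      (𝓝 (q.totient : ℝ)⁻¹) :=
    (Continuous.tendsto' (by fun_prop) 0 _ (by simp)).mono_left nhdsWithin_le_nhds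
  have h_pos : (0 : ℝ) < (q.totient : ℝ)⁻¹ :=
    inv_pos.mpr (Nat.cast_pos.mpr (Nat.totient_pos.mpr (NeZero.pos q)))
  exact h_pos.not_ge (le_of_tendsto_of_tendsto h_limit h_zero h_lower)

end PrimesInResidueClass

/-! ### Sieving by exact divisibility -/

lemma count_forall_le_prod_count {ι : Type*} {P : Finset ι} {m : ι → ℕ} {Q : ι → ℕ → Prop}
    [∀ i, DecidablePred (Q i)] (h_coprime : (P : Set ι).Pairwise (Function.onFun Nat.Coprime m))
    (h_periodic : ∀ i ∈ P, Function.Periodic (Q i) (m i)) :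
    (∏ i ∈ P, m i).count (fun n => ∀ i ∈ P, Q i n) ≤ ∏ i ∈ P, (m i).count (Q i) := by
  classical
  simp only [Nat.count_eq_card_filter_range]
  rw [← card_pi]
  refine card_le_card_of_injOn (fun n i _ => n % m i) (fun n hn => ?_) fun n hn n' hn' h_eq => ?_
  · rw [mem_coe, mem_filter, Finset.mem_range] at hn
    refine mem_coe.mpr (mem_pi.mpr fun i hi => mem_filter.mpr ⟨Finset.mem_range.mpr ?_, ?_⟩)
    · refine Nat.mod_lt _ (Nat.pos_of_ne_zero fun h => ?_)
      exact (Nat.zero_le n).not_gt (prod_eq_zero hi h ▸ hn.1)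
    · rw [(h_periodic i hi).map_mod_nat]
      exact hn.2 i hi
  · rw [mem_coe, mem_filter, Finset.mem_range] at hn hn'
    refine Nat.ModEq.eq_of_lt_of_lt (m := ∏ i ∈ P, m i) ?_ hn.1 hn'.1
    rw [Nat.modEq_iff_dvd, Nat.cast_prod]
    exact Finset.prod_dvd_of_coprime
      (fun i hi j hj hij => Nat.isCoprime_iff_coprime.mpr (h_coprime hi hj hij))
      fun i hi => Nat.modEq_iff_dvd.mp (congrFun (congrFun h_eq i) hi)

lemma card_filter_Ioc_le_of_periodic {Q : ℕ → Prop} [DecidablePred Q] {M : ℕ} (hM : 0 < M)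
    (hQ : Function.Periodic Q M) (N : ℕ) :
    #{n ∈ Finset.Ioc 0 N | Q n} ≤ (N / M + 1) * M.count Q := by
  rw [Nat.count_eq_card_filter_range, ← card_range (N / M + 1), ← card_product]
  refine card_le_card_of_injOn (fun n => (n / M, n % M)) (fun n hn => ?_) fun n _ n' _ h_eq => ?_
  · rw [mem_coe, mem_filter, Finset.mem_Ioc] at hn
    rw [mem_coe, mem_product, Finset.mem_range, mem_filter, Finset.mem_range, hQ.map_mod_nat]
    exact ⟨Nat.lt_succ_of_le (Nat.div_le_div_right hn.1.2), Nat.mod_lt _ hM, hn.2⟩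
  · obtain ⟨h_div, h_mod⟩ := Prod.mk.inj h_eq
    rw [← Nat.div_add_mod n M, ← Nat.div_add_mod n' M, h_div, h_mod]

/-- Exact divisibility `p ∥ n`; a prime `p ≡ 3 (mod 4)` never divides a sum of two squares
exactly, which makes this the sieving condition for such sums. -/
def ExactlyDivides (p n : ℕ) : Prop := p ∣ n ∧ ¬ p ^ 2 ∣ n

instance (p : ℕ) : DecidablePred (ExactlyDivides p) :=
  fun _ => inferInstanceAs (Decidable (_ ∧ _))

lemma ExactlyDivides.periodic (p : ℕ) : Function.Periodic (ExactlyDivides p) (p ^ 2) := fun _ =>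
  propext <| and_congr (Nat.dvd_add_iff_left (Dvd.intro_left p (sq p).symm)).symm
    (not_congr (Nat.dvd_add_self_right))

lemma sub_one_le_count_exactlyDivides (p : ℕ) : p - 1 ≤ (p ^ 2).count (ExactlyDivides p) := by
  rw [Nat.count_eq_card_filter_range, ← Nat.card_Ioo 0 p |>.trans (by omega : _ = p - 1)]
  refine card_le_card_of_injOn (p * ·) (fun a ha => ?_) fun a ha b _ h_eq => ?_
  · obtain ⟨ha0, hap⟩ := Finset.mem_Ioo.mp (mem_coe.mp ha)
    have hp : 0 < p := ha0.trans hap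
    rw [mem_coe, mem_filter, Finset.mem_range, sq]
    refine ⟨Nat.mul_lt_mul_of_pos_left hap hp, Dvd.intro a rfl, fun h => ?_⟩
    rw [sq] at h
    exact Nat.not_dvd_of_pos_of_lt ha0 hap (Nat.dvd_of_mul_dvd_mul_left hp h)
  · obtain ⟨ha0, hap⟩ := Finset.mem_Ioo.mp (mem_coe.mp ha)
    exact Nat.eq_of_mul_eq_mul_left (ha0.trans hap) h_eq

lemma count_not_exactlyDivides_le {p : ℕ} (hp : 2 ≤ p) :
    ((p ^ 2).count (fun n => ¬ ExactlyDivides p n) : ℝ) ≤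
      (p : ℝ) ^ 2 * Real.exp (-(1 / (p : ℝ) / 2)) := by
  have hp2 : (2 : ℝ) ≤ p := Nat.ofNat_le_cast.mpr hp
  have h_compl : (p ^ 2).count (ExactlyDivides p) + (p ^ 2).count (fun n => ¬ ExactlyDivides p n) =
      p ^ 2 := by
    rw [Nat.count_eq_card_filter_range, Nat.count_eq_card_filter_range,
      card_filter_add_card_filter_not, card_range]
  have h_count : (p ^ 2).count (fun n => ¬ ExactlyDivides p n) + p ≤ p ^ 2 + 1 := by
    have := sub_one_le_count_exactlyDivides p
    omega
  calc ((p ^ 2).count (fun n => ¬ ExactlyDivides p n) : ℝ)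
      ≤ (p : ℝ) ^ 2 + 1 - p := le_sub_iff_add_le.mpr (mod_cast h_count)
    _ ≤ (p : ℝ) ^ 2 * (-(1 / (p : ℝ) / 2) + 1) := by
        have : (p : ℝ) ^ 2 * (1 / (p : ℝ) / 2) = p / 2 := by field_simp
        linarith
    _ ≤ (p : ℝ) ^ 2 * Real.exp (-(1 / (p : ℝ) / 2)) := by
        gcongr
        exact Real.add_one_le_exp _

theorem card_forall_not_exactlyDivides_le {P : Finset ℕ} (hP : ∀ p ∈ P, p.Prime) (N : ℕ) :
    (#{n ∈ Finset.Ioc 0 N | ∀ p ∈ P, ¬ ExactlyDivides p n} : ℝ) ≤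
      (N + ∏ p ∈ P, p ^ 2 : ℕ) * Real.exp (-((∑ p ∈ P, 1 / (p : ℝ)) / 2)) := by
  set M := ∏ p ∈ P, p ^ 2
  have hM : 0 < M := prod_pos fun p hp => pow_pos (hP p hp).pos 2
  have h_periodic : ∀ p, Function.Periodic (fun n => ¬ ExactlyDivides p n) (p ^ 2) :=
    fun p => (ExactlyDivides.periodic p).comp Not
  have h_periodic_M : Function.Periodic (fun n => ∀ p ∈ P, ¬ ExactlyDivides p n) M := fun n =>
    propext <| forall₂_congr fun p hp => by
      obtain ⟨c, hc⟩ := Finset.dvd_prod_of_mem (fun p => p ^ 2) hp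
      rw [show M = c * p ^ 2 from hc.trans (mul_comm _ _)]
      exact iff_of_eq ((h_periodic p).nat_mul c n)
  have h_coprime : (P : Set ℕ).Pairwise (Function.onFun Nat.Coprime (· ^ 2)) :=
    fun p hp q hq hpq => ((Nat.coprime_primes (hP p hp) (hP q hq)).mpr hpq).pow 2 2
  have h_count : (M.count (fun n => ∀ p ∈ P, ¬ ExactlyDivides p n) : ℝ) ≤
      M * Real.exp (-((∑ p ∈ P, 1 / (p : ℝ)) / 2)) := by
    calc (M.count (fun n => ∀ p ∈ P, ¬ ExactlyDivides p n) : ℝ)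
        ≤ ∏ p ∈ P, ((p ^ 2).count (fun n => ¬ ExactlyDivides p n) : ℝ) :=
          mod_cast count_forall_le_prod_count h_coprime fun p _ => h_periodic p
      _ ≤ ∏ p ∈ P, ((p : ℝ) ^ 2 * Real.exp (-(1 / (p : ℝ) / 2))) :=
          prod_le_prod (fun p _ => Nat.cast_nonneg _)
            fun p hp => count_not_exactlyDivides_le (hP p hp).two_le
      _ = M * Real.exp (-((∑ p ∈ P, 1 / (p : ℝ)) / 2)) := by
          rw [prod_mul_distrib, ← Real.exp_sum, sum_neg_distrib, sum_div]
          push_cast [M]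
          rfl
  calc (#{n ∈ Finset.Ioc 0 N | ∀ p ∈ P, ¬ ExactlyDivides p n} : ℝ)
      ≤ (N / M + 1 : ℕ) * M.count (fun n => ∀ p ∈ P, ¬ ExactlyDivides p n) :=
        mod_cast card_filter_Ioc_le_of_periodic hM h_periodic_M N
    _ ≤ (N / M + 1 : ℕ) * (M * Real.exp (-((∑ p ∈ P, 1 / (p : ℝ)) / 2))) := by gcongr
    _ = ((N / M * M + M : ℕ) : ℝ) * Real.exp (-((∑ p ∈ P, 1 / (p : ℝ)) / 2)) := by
        push_cast
        ring
    _ ≤ (N + M : ℕ) * Real.exp (-((∑ p ∈ P, 1 / (p : ℝ)) / 2)) := by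
        gcongr
        exact Nat.div_mul_le_self N M

/-! ### The density of the sums of two squares -/

lemma not_exactlyDivides_sq_add_sq {p : ℕ} (hp : p.Prime) (h3 : p % 4 = 3) (x y : ℕ) :
    ¬ ExactlyDivides p (x ^ 2 + y ^ 2) := by
  rintro ⟨h_dvd, h_sq⟩
  have := Fact.mk hp
  have hn : x ^ 2 + y ^ 2 ≠ 0 := fun h => h_sq (h ▸ dvd_zero _)
  have h_even : Even (padicValNat p (x ^ 2 + y ^ 2)) :=
    Nat.eq_sq_add_sq_iff.mp ⟨x, y, rfl⟩ p (Nat.mem_primeFactors.mpr ⟨hp, h_dvd, hn⟩) h3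
  have h_lower := one_le_padicValNat_of_dvd hn h_dvd
  have h_upper : ¬ 2 ≤ padicValNat p (x ^ 2 + y ^ 2) := mt (padicValNat_dvd_iff_le hn).mpr h_sq
  exact absurd ((show padicValNat p (x ^ 2 + y ^ 2) = 1 by omega) ▸ h_even) (by decide)

lemma exists_eq_sq_add_sq_of_latticeR_ne_zero {n : ℕ} (hn : latticeR n ≠ 0) :
    ∃ x y : ℕ, n = x ^ 2 + y ^ 2 := by
  obtain ⟨p, hp⟩ := card_ne_zero.mp hn
  refine ⟨p.1.natAbs, p.2.natAbs, ?_⟩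
  zify
  rw [sq_abs, sq_abs, mem_latticeCircle.mp hp]

lemma exists_primes_three_mod_four_le_sum (B : ℝ) :
    ∃ P : Finset ℕ, (∀ p ∈ P, p.Prime ∧ p % 4 = 3) ∧ B ≤ ∑ p ∈ P, 1 / (p : ℝ) := by
  have h_not := not_summable_one_div_on_primes_residueClass (a := (3 : ZMod 4)) (by decide)
  rw [not_summable_iff_tendsto_nat_atTop_of_nonneg
    fun n => Set.indicator_nonneg (fun _ _ => by positivity) n] at h_not
  obtain ⟨m, hm⟩ := (h_not.eventually_ge_atTop B).exists
  refine ⟨{p ∈ Finset.range m | p.Prime ∧ (p : ZMod 4) = 3}, fun p hp => ?_, ?_⟩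
  · obtain ⟨-, hp, h3⟩ := mem_filter.mp hp
    exact ⟨hp, (ZMod.natCast_eq_natCast_iff' p 3 4).mp h3⟩
  · simpa only [sum_filter, Set.indicator_apply, Set.mem_ofPred_eq] using hm

theorem card_latticeR_ne_zero_isLittleO :
    (fun N : ℕ => (#{n ∈ Finset.Ioc 0 N | latticeR n ≠ 0} : ℝ)) =o[atTop] fun N => (N : ℝ) := by
  refine isLittleO_iff.mpr fun c hc => ?_
  obtain ⟨P, hP, h_sum⟩ := exists_primes_three_mod_four_le_sum (-2 * Real.log (c / 2))
  filter_upwards [eventually_ge_atTop (∏ p ∈ P, p ^ 2)] with N hN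
  rw [Real.norm_natCast, Real.norm_natCast]
  calc (#{n ∈ Finset.Ioc 0 N | latticeR n ≠ 0} : ℝ)
      ≤ #{n ∈ Finset.Ioc 0 N | ∀ p ∈ P, ¬ ExactlyDivides p n} := by
        gcongr with n
        intro hn p hp
        obtain ⟨x, y, rfl⟩ := exists_eq_sq_add_sq_of_latticeR_ne_zero hn
        exact not_exactlyDivides_sq_add_sq (hP p hp).1 (hP p hp).2 x y
    _ ≤ (N + ∏ p ∈ P, p ^ 2 : ℕ) * Real.exp (-((∑ p ∈ P, 1 / (p : ℝ)) / 2)) :=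
        card_forall_not_exactlyDivides_le (fun p hp => (hP p hp).1) N
    _ ≤ (N + N : ℕ) * Real.exp (Real.log (c / 2)) := by
        gcongr
        linarith
    _ = c * N := by
        rw [Real.exp_log (half_pos hc)]
        push_cast
        ring

/-! ### The first moment of the angular sums -/

theorem sum_norm_latticeS_isLittleO {k : ℤ} (hk : k ≠ 0) :
    (fun N : ℕ => ∑ n ∈ Finset.Ioc 0 N, ‖latticeS n k‖) =o[atTop] fun N => (N : ℝ) := by
  obtain ⟨C, hC⟩ := exists_sum_norm_latticeS_sq_le hk
  have h_zero : ∀ n, latticeR n = 0 → ‖latticeS n k‖ = 0 := fun n hn => by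
    rw [latticeS, card_eq_zero.mp hn, sum_empty, norm_zero]
  have h_sq : ∀ N : ℕ, (∑ n ∈ Finset.Ioc 0 N, ‖latticeS n k‖) ^ 2 ≤
      #{n ∈ Finset.Ioc 0 N | latticeR n ≠ 0} * (C * N) := fun N => by
    rw [← sum_filter_of_ne fun n _ h => mt (h_zero n) h]
    refine sq_sum_le_card_mul_sum_sq.trans ?_
    gcongr
    exact (sum_le_sum_of_subset_of_nonneg (filter_subset _ _) fun _ _ _ => sq_nonneg _).trans (hC N)
  refine IsLittleO.of_pow (n := 2) (IsBigO.trans_isLittleO (g := fun N : ℕ =>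
    (#{n ∈ Finset.Ioc 0 N | latticeR n ≠ 0} : ℝ) * (C * N)) ?_ ?_) two_ne_zero
  · exact .of_norm_le fun N => (Real.norm_of_nonneg (sq_nonneg _)).trans_le (h_sq N)
  · simp only [sq]
    exact card_latticeR_ne_zero_isLittleO.mul_isBigO ((isBigO_refl _ _).const_mul_left C)

/-! ### Averages of sequences of linear maps -/

section LinearMapAverages

variable {𝕜 E G : Type*} [NontriviallyNormedField 𝕜] [NormedAddCommGroup E] [NormedSpace 𝕜 E]
  [NormedAddCommGroup G] [NormedSpace 𝕜 G] {A : ℕ → E →ₗ[𝕜] G} {c φ : ℕ → ℝ}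

lemma sum_norm_map_isLittleO_of_mem_span {s : Set E}
    (hs : ∀ f ∈ s, (fun N => ∑ n ∈ Finset.Ioc 0 N, ‖A n f‖) =o[atTop] φ) {f : E}
    (hf : f ∈ Submodule.span 𝕜 s) :
    (fun N => ∑ n ∈ Finset.Ioc 0 N, ‖A n f‖) =o[atTop] φ := by
  induction hf using Submodule.span_induction with
  | mem f hf => exact hs f hf
  | zero => simp only [map_zero, norm_zero, sum_const_zero, isLittleO_zero]
  | add f g _ _ hf hg =>
    refine (IsBigO.of_norm_le fun N => ?_).trans_isLittleO (hf.add hg)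
    rw [Real.norm_of_nonneg (sum_nonneg fun _ _ => norm_nonneg _), ← sum_add_distrib]
    gcongr with n
    rw [map_add]
    exact norm_add_le _ _
  | smul a f _ hf =>
    simp only [map_smul, norm_smul, ← mul_sum]
    exact hf.const_mul_left _

lemma norm_map_le_add (hA : ∀ n f, ‖A n f‖ ≤ c n * ‖f‖) (n : ℕ) (f f' : E) :
    ‖A n f‖ ≤ ‖A n f'‖ + ‖f - f'‖ * c n :=
  calc ‖A n f‖ = ‖A n f' + A n (f - f')‖ := by rw [← map_add, add_sub_cancel]
    _ ≤ ‖A n f'‖ + ‖f - f'‖ * c n := (norm_add_le _ _).trans (by grw [hA n (f - f'), mul_comm])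

theorem sum_norm_map_isLittleO_of_dense_span (hA : ∀ n f, ‖A n f‖ ≤ c n * ‖f‖)
    (hc : (fun N => ∑ n ∈ Finset.Ioc 0 N, c n) =O[atTop] φ) {s : Set E}
    (h_dense : (Submodule.span 𝕜 s).topologicalClosure = ⊤)
    (hs : ∀ f ∈ s, (fun N => ∑ n ∈ Finset.Ioc 0 N, ‖A n f‖) =o[atTop] φ) (f : E) :
    (fun N => ∑ n ∈ Finset.Ioc 0 N, ‖A n f‖) =o[atTop] φ := by
  refine isLittleO_iff.mpr fun ε hε => ?_
  obtain ⟨C, hC, h_bound⟩ := hc.exists_pos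
  have hf : f ∈ closure (Submodule.span 𝕜 s : Set E) := by
    rw [← Submodule.topologicalClosure_coe, h_dense]
    exact Set.mem_univ f
  obtain ⟨f', hf', h_dist⟩ := Metric.mem_closure_iff.mp hf (ε / 2 / C) (by positivity)
  rw [dist_eq_norm] at h_dist
  filter_upwards [h_bound.bound,
    (sum_norm_map_isLittleO_of_mem_span hs hf').bound (half_pos hε)] with N hN hN'
  rw [Real.norm_of_nonneg (sum_nonneg fun _ _ => norm_nonneg _)] at hN' ⊢
  have h_sum : ∑ n ∈ Finset.Ioc 0 N, c n ≤ C * ‖φ N‖ := (Real.le_norm_self _).trans hN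
  calc ∑ n ∈ Finset.Ioc 0 N, ‖A n f‖
      ≤ ∑ n ∈ Finset.Ioc 0 N, (‖A n f'‖ + ‖f - f'‖ * c n) :=
        sum_le_sum fun n _ => norm_map_le_add hA n f f'
    _ = ∑ n ∈ Finset.Ioc 0 N, ‖A n f'‖ + ‖f - f'‖ * ∑ n ∈ Finset.Ioc 0 N, c n := by
        rw [sum_add_distrib, mul_sum]
    _ ≤ ε / 2 * ‖φ N‖ + ‖f - f'‖ * (C * ‖φ N‖) := by gcongr
    _ ≤ ε / 2 * ‖φ N‖ + ε / 2 / C * (C * ‖φ N‖) := by gcongr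
    _ = ε * ‖φ N‖ := by
        field_simp
        ring

lemma exists_finset_iSup_norm_map_le (hA : ∀ n f, ‖A n f‖ ≤ c n * ‖f‖) (hc0 : 0 ≤ c)
    {K : Set E} (hK : IsCompact K) {δ : ℝ} (hδ : 0 < δ) :
    ∃ t : Finset E, ↑t ⊆ K ∧ ∀ n, ⨆ f : K, ‖A n f‖ ≤ ∑ f ∈ t, ‖A n f‖ + δ * c n := by
  obtain ⟨t, htK, ht, h_cover⟩ := hK.finite_cover_balls hδ
  refine ⟨ht.toFinset, by rwa [ht.coe_toFinset], fun n => Real.iSup_le (fun f => ?_) ?_⟩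
  · obtain ⟨f', hf', h_dist⟩ := Set.mem_iUnion₂.mp (h_cover f.2)
    rw [mem_ball_iff_norm] at h_dist
    refine (norm_map_le_add hA n f f').trans (add_le_add ?_ ?_)
    · exact single_le_sum (f := fun f => ‖A n f‖) (fun _ _ => norm_nonneg _)
        (ht.mem_toFinset.mpr hf')
    · exact mul_le_mul_of_nonneg_right h_dist.le (hc0 n)
  · exact add_nonneg (sum_nonneg fun _ _ => norm_nonneg _) (mul_nonneg hδ.le (hc0 n))

theorem sum_iSup_norm_map_isLittleO (hA : ∀ n f, ‖A n f‖ ≤ c n * ‖f‖) (hc0 : 0 ≤ c)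
    (hc : (fun N => ∑ n ∈ Finset.Ioc 0 N, c n) =O[atTop] φ) {K : Set E} (hK : IsCompact K)
    (h : ∀ f ∈ K, (fun N => ∑ n ∈ Finset.Ioc 0 N, ‖A n f‖) =o[atTop] φ) :
    (fun N => ∑ n ∈ Finset.Ioc 0 N, ⨆ f : K, ‖A n f‖) =o[atTop] φ := by
  refine isLittleO_iff.mpr fun ε hε => ?_
  obtain ⟨C, hC, h_bound⟩ := hc.exists_pos
  obtain ⟨t, htK, ht⟩ := exists_finset_iSup_norm_map_le hA hc0 hK (δ := ε / 2 / C) (by positivity)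
  have h_net : (fun N => ∑ f ∈ t, ∑ n ∈ Finset.Ioc 0 N, ‖A n f‖) =o[atTop] φ :=
    IsLittleO.fun_sum fun f hf => h f (htK hf)
  filter_upwards [h_bound.bound, h_net.bound (half_pos hε)] with N hN hN'
  rw [Real.norm_of_nonneg (sum_nonneg fun n _ => Real.iSup_nonneg fun _ => norm_nonneg _)]
  calc ∑ n ∈ Finset.Ioc 0 N, ⨆ f : K, ‖A n f‖
      ≤ ∑ n ∈ Finset.Ioc 0 N, (∑ f ∈ t, ‖A n f‖ + ε / 2 / C * c n) := sum_le_sum fun n _ => ht n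
    _ = ∑ f ∈ t, ∑ n ∈ Finset.Ioc 0 N, ‖A n f‖ + ε / 2 / C * ∑ n ∈ Finset.Ioc 0 N, c n := by
        rw [sum_add_distrib, mul_sum, sum_comm]
    _ ≤ ε / 2 * ‖φ N‖ + ε / 2 / C * (C * ‖φ N‖) := by
        gcongr
        · exact (Real.le_norm_self _).trans hN'
        · exact (Real.le_norm_self _).trans hN
    _ = ε * ‖φ N‖ := by
        field_simp
        ring

lemma norm_map_le_iSup (hA : ∀ n f, ‖A n f‖ ≤ c n * ‖f‖) (hc0 : 0 ≤ c) {K : Set E}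
    (hK : Bornology.IsBounded K) {f : E} (hf : f ∈ K) (n : ℕ) : ‖A n f‖ ≤ ⨆ f : K, ‖A n f‖ := by
  obtain ⟨M, hM⟩ := hK.exists_norm_le
  have h_bdd : BddAbove (Set.range fun f : K => ‖A n f‖) :=
    ⟨c n * M, by
      rintro _ ⟨f, rfl⟩
      exact (hA n f).trans (mul_le_mul_of_nonneg_left (hM f f.2) (hc0 n))⟩
  exact le_ciSup h_bdd ⟨f, hf⟩

end LinearMapAverages

/-! ### Equidistribution of the lattice angles on circles -/

local instance : Fact (0 < 2 * Real.pi) := ⟨Real.two_pi_pos⟩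

/-- The discrepancy of the lattice angles on the circle of squared radius `n`, tested against all
rotations of `F`: at `α` it is `∑ F (θ_u + α)` minus `r(n)` times the mean of `F`. The mean is
written as the zeroth Fourier coefficient. -/
noncomputable def angularDiscrepancy (n : ℕ) :
    C(AddCircle (2 * Real.pi), ℂ) →ₗ[ℂ] C(AddCircle (2 * Real.pi), ℂ) where
  toFun F := ∑ u ∈ latticeCircle n, (F.comp (.addLeft ↑(latticeTheta u)) -
    .const _ (fourierCoeff F 0))
  map_add' F F' := by
    rw [← sum_add_distrib]
    refine sum_congr rfl fun u _ => ContinuousMap.ext fun α => ?_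
    have h_add := fourierCoeff.add (F.continuous.integrable_of_hasCompactSupport
      (HasCompactSupport.of_compactSpace _)) (F'.continuous.integrable_of_hasCompactSupport
      (HasCompactSupport.of_compactSpace _)) (T := 2 * Real.pi)
    simp only [ContinuousMap.coe_add, h_add, Pi.add_apply, ContinuousMap.sub_apply,
      ContinuousMap.add_apply, ContinuousMap.comp_apply, ContinuousMap.const_apply]
    ring
  map_smul' a F := by
    rw [smul_sum]
    refine sum_congr rfl fun u _ => ContinuousMap.ext fun α => ?_
    simp only [ContinuousMap.coe_smul, fourierCoeff.const_smul, ContinuousMap.sub_apply,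
      ContinuousMap.smul_apply, ContinuousMap.comp_apply, ContinuousMap.const_apply,
      RingHom.id_apply, smul_sub]

lemma angularDiscrepancy_apply (n : ℕ) (F : C(AddCircle (2 * Real.pi), ℂ))
    (α : AddCircle (2 * Real.pi)) :
    angularDiscrepancy n F α =
      ∑ u ∈ latticeCircle n, F (latticeTheta u + α) - latticeR n * fourierCoeff F 0 := by
  simp [angularDiscrepancy, latticeR]

lemma norm_fourierCoeff_le (F : C(AddCircle (2 * Real.pi), ℂ)) (k : ℤ) :
    ‖fourierCoeff F k‖ ≤ ‖F‖ := by
  refine (norm_integral_le_of_norm_le_const (C := ‖F‖) (.of_forall fun θ => ?_)).trans ?_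
  · rw [norm_smul, fourier_apply, Circle.norm_coe, one_mul]
    exact F.norm_coe_le_norm θ
  · rw [probReal_univ, mul_one]

lemma norm_angularDiscrepancy_le (n : ℕ) (F : C(AddCircle (2 * Real.pi), ℂ)) :
    ‖angularDiscrepancy n F‖ ≤ 2 * latticeR n * ‖F‖ := by
  refine (ContinuousMap.norm_le _ (by positivity)).mpr fun α => ?_
  rw [angularDiscrepancy_apply]
  calc ‖∑ u ∈ latticeCircle n, F (latticeTheta u + α) - latticeR n * fourierCoeff F 0‖
      ≤ ∑ u ∈ latticeCircle n, ‖F (latticeTheta u + α)‖ + ‖(latticeR n * fourierCoeff F 0 : ℂ)‖ :=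
        (norm_sub_le _ _).trans (by gcongr; exact norm_sum_le _ _)
    _ ≤ ∑ _ ∈ latticeCircle n, ‖F‖ + latticeR n * ‖F‖ := by
        rw [norm_mul, Complex.norm_natCast]
        gcongr
        · exact F.norm_coe_le_norm _
        · exact norm_fourierCoeff_le F 0
    _ = 2 * latticeR n * ‖F‖ := by
        rw [sum_const, nsmul_eq_mul, latticeR]
        ring

lemma norm_angularDiscrepancy_fourier_le (n : ℕ) {k : ℤ} (hk : k ≠ 0) :
    ‖angularDiscrepancy n (fourier k)‖ ≤ ‖latticeS n k‖ := by
  refine (ContinuousMap.norm_le _ (norm_nonneg _)).mpr fun α => ?_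
  have h_mean : fourierCoeff (fourier k : C(AddCircle (2 * Real.pi), ℂ)) 0 = 0 := by
    rw [fourierCoeff_fourier, Pi.single_eq_of_ne hk.symm]
  have h_sum : ∑ u ∈ latticeCircle n, fourier k ((latticeTheta u : AddCircle (2 * Real.pi)) + α) =
      latticeS n k * fourier k α := by
    rw [latticeS, sum_mul]
    refine sum_congr rfl fun u _ => ?_
    rw [fourier_apply, smul_add, AddCircle.toCircle_add, Circle.coe_mul, ← fourier_apply,
      ← fourier_apply, fourier_coe_apply]
    congr 2
    push_cast
    field_simp
  rw [angularDiscrepancy_apply, h_mean, mul_zero, sub_zero, h_sum, norm_mul, fourier_apply,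
    Circle.norm_coe, mul_one]

lemma angularDiscrepancy_fourier_zero (n : ℕ) : angularDiscrepancy n (fourier 0) = 0 := by
  ext α
  rw [angularDiscrepancy_apply, fourierCoeff_fourier, Pi.single_eq_same]
  simp only [fourier_zero, sum_const, nsmul_one, latticeR, mul_one, sub_self,
    ContinuousMap.zero_apply]

lemma sum_two_mul_latticeR_isBigO :
    (fun N : ℕ => ∑ n ∈ Finset.Ioc 0 N, 2 * (latticeR n : ℝ)) =O[atTop] fun N => (N : ℝ) := by
  refine IsBigO.of_bound 18 (.of_forall fun N => ?_)
  rw [Real.norm_of_nonneg (by positivity), Real.norm_natCast, ← mul_sum]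
  linarith [sum_latticeR_le N]

theorem sum_norm_angularDiscrepancy_isLittleO (F : C(AddCircle (2 * Real.pi), ℂ)) :
    (fun N : ℕ => ∑ n ∈ Finset.Ioc 0 N, ‖angularDiscrepancy n F‖) =o[atTop] fun N => (N : ℝ) := by
  refine sum_norm_map_isLittleO_of_dense_span norm_angularDiscrepancy_le
    sum_two_mul_latticeR_isBigO span_fourier_closure_eq_top ?_ F
  rintro _ ⟨k, rfl⟩
  obtain rfl | hk := eq_or_ne k 0
  · simp only [angularDiscrepancy_fourier_zero, norm_zero, sum_const_zero, isLittleO_zero]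
  · refine (IsBigO.of_norm_le fun N => ?_).trans_isLittleO (sum_norm_latticeS_isLittleO hk)
    rw [Real.norm_of_nonneg (sum_nonneg fun _ _ => norm_nonneg _)]
    exact sum_le_sum fun n _ => norm_angularDiscrepancy_fourier_le n hk

/-- The mean of `g w` over a period, the inner integral of the collision value `Qcont`. -/
noncomputable def angularMean {W : Type*} (g : W → ℝ → ℝ) (w : W) : ℝ :=
  (1 / (2 * Real.pi)) * ∫ θ in (-Real.pi)..Real.pi, g w θ

section CircleLift

variable {W : Type*} [TopologicalSpace W] {g : W → ℝ → ℝ}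

/-- A jointly continuous family of `2π`-periodic functions, as a continuous map from the parameter
space to the continuous functions on the circle with the supremum norm. -/
noncomputable def circleLift (hper : ∀ w, Function.Periodic (g w) (2 * Real.pi))
    (hg : Continuous fun p : W × ℝ => g p.1 p.2) : C(W, C(AddCircle (2 * Real.pi), ℂ)) :=
  ContinuousMap.curry
    { toFun := fun p => ((hper p.1).lift p.2 : ℂ)
      continuous_toFun := by
        have h_quot : IsOpenQuotientMap
            (Prod.map id (↑) : W × ℝ → W × AddCircle (2 * Real.pi)) :=
          IsOpenQuotientMap.id.prodMap QuotientAddGroup.isOpenQuotientMap_mk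
        exact h_quot.isQuotientMap.continuous_iff.mpr (Complex.continuous_ofReal.comp hg) }

lemma circleLift_coe (hper : ∀ w, Function.Periodic (g w) (2 * Real.pi))
    (hg : Continuous fun p : W × ℝ => g p.1 p.2) (w : W) (θ : ℝ) :
    circleLift hper hg w θ = g w θ := by
  simp [circleLift, Function.Periodic.lift_coe]

lemma fourierCoeff_circleLift_zero (hper : ∀ w, Function.Periodic (g w) (2 * Real.pi))
    (hg : Continuous fun p : W × ℝ => g p.1 p.2) (w : W) :
    fourierCoeff (circleLift hper hg w) 0 = angularMean g w := by
  have h_end : -Real.pi + 2 * Real.pi = Real.pi := by ring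
  simp only [fourierCoeff_eq_intervalIntegral _ _ (-Real.pi), h_end, neg_zero, fourier_zero,
    one_smul, circleLift_coe, intervalIntegral.integral_ofReal, angularMean, Complex.real_smul,
    Complex.ofReal_mul]

theorem exists_angular_error_bound (hper : ∀ w, Function.Periodic (g w) (2 * Real.pi))
    (hg : Continuous fun p : W × ℝ => g p.1 p.2) {L : Set W} (hL : IsCompact L) :
    ∃ b : ℕ → ℝ, 0 ≤ b ∧ (∀ n, ∀ w ∈ L, ∀ α : ℝ,
        |∑ u ∈ latticeCircle n, g w (latticeTheta u - α) - latticeR n * angularMean g w| ≤ b n) ∧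
      (fun N : ℕ => ∑ n ∈ Finset.Ioc 0 N, b n) =o[atTop] fun N => (N : ℝ) := by
  have h_compact : IsCompact (circleLift hper hg '' L) := hL.image (circleLift hper hg).continuous
  have hc0 : (0 : ℕ → ℝ) ≤ fun n => 2 * (latticeR n : ℝ) := fun n => by positivity
  refine ⟨fun n => ⨆ F : circleLift hper hg '' L, ‖angularDiscrepancy n F‖,
    fun n => Real.iSup_nonneg fun _ => norm_nonneg _, fun n w hw α => ?_,
    sum_iSup_norm_map_isLittleO norm_angularDiscrepancy_le hc0
      sum_two_mul_latticeR_isBigO h_compact fun F _ => sum_norm_angularDiscrepancy_isLittleO F⟩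
  refine le_trans ?_ (norm_map_le_iSup norm_angularDiscrepancy_le hc0 h_compact.isBounded
    (Set.mem_image_of_mem _ hw) n)
  refine le_trans ?_ (ContinuousMap.norm_coe_le_norm _ ((-α : ℝ) : AddCircle (2 * Real.pi)))
  simp only [angularDiscrepancy_apply, fourierCoeff_circleLift_zero, ← AddCircle.coe_add,
    circleLift_coe, ← sub_eq_add_neg]
  rw [← Real.norm_eq_abs, ← Complex.norm_real]
  push_cast
  rfl

end CircleLift

/-- The discrete counterpart of `angularMean`: the mean of `g w` over the lattice angles on the
circle through `ζ`, measured from the angle of `ζ`. -/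
noncomputable def latticeAngularMean {W : Type*} (g : W → ℝ → ℝ) (w : W) (ζ : GaussianInt) : ℝ :=
  (1 / (latticeR ζ.norm.toNat : ℝ)) *
    ∑ u ∈ latticeCircle ζ.norm.toNat, g w (latticeTheta u - latticeTheta (ζ.re, ζ.im))

lemma abs_latticeAngularMean_sub_angularMean_le {W : Type*} {g : W → ℝ → ℝ} {w : W} {n : ℕ}
    {b : ℝ} (hb : ∀ α : ℝ,
      |∑ u ∈ latticeCircle n, g w (latticeTheta u - α) - latticeR n * angularMean g w| ≤ b)
    {ζ : GaussianInt} (hζ : ζ ∈ gaussianSphere n) :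
    |latticeAngularMean g w ζ - angularMean g w| ≤ b / latticeR n := by
  have h_pos : 0 < (latticeR n : ℝ) := by
    rw [← card_gaussianSphere]
    exact_mod_cast card_pos.mpr ⟨ζ, hζ⟩
  have h_norm : ζ.norm.toNat = n := by rw [mem_gaussianSphere.mp hζ, Int.toNat_natCast]
  have h_mul : (latticeAngularMean g w ζ - angularMean g w) * latticeR n =
      ∑ u ∈ latticeCircle n, g w (latticeTheta u - latticeTheta (ζ.re, ζ.im)) -
        latticeR n * angularMean g w := by
    rw [latticeAngularMean, h_norm]
    field_simp
  rw [le_div_iff₀ h_pos]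
  nth_rw 1 [← abs_of_pos h_pos]
  rw [← abs_mul, h_mul]
  exact hb _

lemma sum_abs_latticeAngularMean_sub_le {W : Type*} {g : W → ℝ → ℝ} {L : Set W} {b : ℕ → ℝ}
    (hb0 : 0 ≤ b) (hb : ∀ n, ∀ w ∈ L, ∀ α : ℝ,
      |∑ u ∈ latticeCircle n, g w (latticeTheta u - α) - latticeR n * angularMean g w| ≤ b n)
    {N : ℕ} {w : GaussianInt → W} (hw : ∀ ζ ∈ gaussianBall N, w ζ ∈ L) :
    ∑ ζ ∈ gaussianBall N, |latticeAngularMean g (w ζ) ζ - angularMean g (w ζ)| ≤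
      ∑ n ∈ Finset.Ioc 0 N, b n := by
  rw [sum_gaussianShell]
  refine sum_le_sum fun n hn => ?_
  have h_le : ∀ ζ ∈ gaussianSphere n,
      |latticeAngularMean g (w ζ) ζ - angularMean g (w ζ)| ≤ b n / latticeR n := fun ζ hζ =>
    abs_latticeAngularMean_sub_angularMean_le
      (hb n (w ζ) (hw ζ (mem_gaussianShell.mpr ⟨n, hn, mem_gaussianSphere.mp hζ⟩))) hζ
  refine (sum_le_card_nsmul _ _ _ h_le).trans ?_
  rw [card_gaussianSphere, nsmul_eq_mul, mul_comm]
  exact mul_le_of_le_div₀ (hb0 n) (Nat.cast_nonneg _) le_rfl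

/-! ### Riemann sums over scaled balls of Gaussian integers -/

lemma tendsto_mul_latticeFloor (z : ℂ) :
    Tendsto (fun h : ℝ => (h * latticeFloor h z : ℂ)) (𝓝[>] 0) (𝓝 z) := by
  have h_two_mul : Tendsto (fun h : ℝ => 2 * h) (𝓝[>] 0) (𝓝 0) :=
    ((continuous_const_mul 2).tendsto' 0 0 (mul_zero 2)).mono_left nhdsWithin_le_nhds
  refine tendsto_iff_norm_sub_tendsto_zero.mpr (squeeze_zero' (.of_forall fun _ => norm_nonneg _)
    ?_ h_two_mul)
  filter_upwards [self_mem_nhdsWithin] with h hh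
  rw [norm_sub_rev]
  exact norm_sub_latticeFloor_le hh z

lemma norm_sq_mul_toComplex (h : ℝ) (ζ : GaussianInt) :
    ‖(h * ζ : ℂ)‖ ^ 2 = h ^ 2 * (ζ.norm : ℝ) := by
  rw [norm_mul, mul_pow, norm_toComplex_sq, Complex.norm_real, Real.norm_eq_abs, sq_abs]

lemma norm_le_floor_iff {h : ℝ} (hh : 0 < h) (R : ℝ) (ζ : GaussianInt) :
    ζ.norm ≤ ⌊R ^ 2 / h ^ 2⌋₊ ↔ h ^ 2 * (ζ.norm : ℝ) ≤ R ^ 2 := by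
  rw [Int.natCast_floor_eq_floor (by positivity), Int.le_floor, le_div_iff₀ (by positivity),
    mul_comm]

lemma mem_gaussianBall_floor {h R : ℝ} (hh : 0 < h) (hR : 0 ≤ R) {ζ : GaussianInt} :
    ζ ∈ gaussianBall ⌊R ^ 2 / h ^ 2⌋₊ ↔ (h * ζ : ℂ) ∈ Metric.closedBall 0 R \ {0} := by
  rw [mem_gaussianBall, norm_le_floor_iff hh, ← norm_sq_mul_toComplex, sq_le_sq₀ (norm_nonneg _) hR,
    Set.mem_sdiff, mem_closedBall_zero_iff, Set.mem_singleton_iff, mul_eq_zero, and_comm]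
  simp [hh.ne']

lemma tendsto_floor_sq_div_sq {R : ℝ} (hR : 0 < R) :
    Tendsto (fun h : ℝ => ⌊R ^ 2 / h ^ 2⌋₊) (𝓝[>] 0) atTop := by
  have h_inv_sq : Tendsto (fun h : ℝ => h⁻¹ ^ 2) (𝓝[>] 0) atTop :=
    (tendsto_pow_atTop two_ne_zero).comp tendsto_inv_nhdsGT_zero
  refine tendsto_nat_floor_atTop.comp ((h_inv_sq.const_mul_atTop (pow_pos hR 2)).congr fun h => ?_)
  rw [inv_pow, div_eq_mul_inv]

section RiemannSum

variable {E : Type*} [NormedAddCommGroup E] {G : ℂ → E} {R : ℝ}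

lemma volume_frontier_punctured_closedBall (R : ℝ) :
    volume (frontier (Metric.closedBall (0 : ℂ) R \ {0})) = 0 := by
  have h_subset : frontier (Metric.closedBall (0 : ℂ) R \ {0}) ⊆ Metric.sphere 0 R ∪ {0} := by
    rw [Set.sdiff_eq_compl_inter, Set.inter_comm]
    refine (frontier_inter_subset _ _).trans (Set.union_subset_union ?_ ?_)
    · exact Set.inter_subset_left.trans (frontier_closedBall' (0 : ℂ) R).subset
    · rw [frontier_compl]
      exact Set.inter_subset_right.trans isClosed_singleton.frontier_subset
  exact measure_mono_null h_subset
    (measure_union_null (Measure.addHaar_sphere volume 0 R) (measure_singleton 0))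

lemma norm_indicator_mul_latticeFloor_le (hR : 0 ≤ R) {C : ℝ}
    (hC : ∀ z ∈ Metric.closedBall 0 R, ‖G z‖ ≤ C) {h : ℝ} (hh : h ∈ Set.Ioo 0 1) (z : ℂ) :
    ‖(Metric.closedBall 0 R \ {0}).indicator G (h * latticeFloor h z)‖ ≤
      (Metric.closedBall 0 (R + 2)).indicator (fun _ => C) z := by
  by_cases h_mem : (h * latticeFloor h z : ℂ) ∈ Metric.closedBall 0 R \ {0}
  · have hz : z ∈ Metric.closedBall 0 (R + 2) := by
      rw [mem_closedBall_zero_iff]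
      linarith [norm_le_norm_add_norm_sub' z (h * latticeFloor h z),
        norm_sub_latticeFloor_le hh.1 z, mem_closedBall_zero_iff.mp h_mem.1, hh.2]
    rw [Set.indicator_of_mem h_mem, Set.indicator_of_mem hz]
    exact hC _ h_mem.1
  · have hC0 : 0 ≤ C := (norm_nonneg _).trans (hC 0 (Metric.mem_closedBall_self hR))
    rw [Set.indicator_of_notMem h_mem, norm_zero]
    exact Set.indicator_nonneg (fun _ _ => hC0) z

variable [NormedSpace ℝ E] [CompleteSpace E]

lemma integral_indicator_mul_latticeFloor {h : ℝ} (hh : 0 < h) (hR : 0 ≤ R) :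
    Integrable (fun z => (Metric.closedBall 0 R \ {0}).indicator G (h * latticeFloor h z)) ∧
    ∫ z, (Metric.closedBall 0 R \ {0}).indicator G (h * latticeFloor h z) =
      h ^ 2 • ∑ ζ ∈ gaussianBall ⌊R ^ 2 / h ^ 2⌋₊, G (h * ζ) := by
  have h_vanish : ∀ ζ ∉ gaussianBall ⌊R ^ 2 / h ^ 2⌋₊,
      (Metric.closedBall 0 R \ {0}).indicator G (h * (ζ : ℂ)) = 0 := fun ζ hζ =>
    Set.indicator_of_notMem (fun h_mem => hζ ((mem_gaussianBall_floor hh hR).mpr h_mem)) G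
  refine ⟨integrable_comp_latticeFloor hh h_vanish, ?_⟩
  rw [integral_comp_latticeFloor hh h_vanish]
  congr 1
  exact sum_congr rfl fun ζ hζ => Set.indicator_of_mem ((mem_gaussianBall_floor hh hR).mp hζ) G

theorem tendsto_sq_smul_sum_gaussianBall (hG : Continuous G) (hR : 0 ≤ R) :
    Tendsto (fun h : ℝ => h ^ 2 • ∑ ζ ∈ gaussianBall ⌊R ^ 2 / h ^ 2⌋₊, G (h * ζ)) (𝓝[>] 0)
      (𝓝 (∫ z in Metric.closedBall 0 R, G z)) := by
  set F := (Metric.closedBall 0 R \ {0}).indicator G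
  obtain ⟨C, hC⟩ := (isCompact_closedBall (0 : ℂ) R).exists_bound_of_continuousOn hG.continuousOn
  have h_integral : ∫ z, F z = ∫ z in Metric.closedBall 0 R, G z := by
    rw [integral_indicator (measurableSet_closedBall.diff (measurableSet_singleton 0))]
    exact setIntegral_congr_set (sdiff_null_ae_eq_self (by simp))
  have h_lim : Tendsto (fun h : ℝ => ∫ z, F (h * latticeFloor h z)) (𝓝[>] 0) (𝓝 (∫ z, F z)) := by
    refine tendsto_integral_filter_of_dominated_convergence
      ((Metric.closedBall 0 (R + 2)).indicator fun _ => C) ?_ ?_ ?_ ?_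
    · filter_upwards [self_mem_nhdsWithin] with h hh
      exact (integral_indicator_mul_latticeFloor hh hR).1.aestronglyMeasurable
    · filter_upwards [Ioo_mem_nhdsGT one_pos] with h hh
      exact .of_forall (norm_indicator_mul_latticeFloor_le hR hC hh)
    · exact (integrable_indicator_iff measurableSet_closedBall).mpr
        (integrableOn_const measure_closedBall_lt_top.ne)
    · filter_upwards [measure_eq_zero_iff_ae_notMem.mp (volume_frontier_punctured_closedBall R)]
        with z hz
      exact (hG.continuousOn.continuousAt_indicator hz).tendsto.comp (tendsto_mul_latticeFloor z)
  rw [← h_integral]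
  refine h_lim.congr' ?_
  filter_upwards [self_mem_nhdsWithin] with h hh
  exact (integral_indicator_mul_latticeFloor hh hR).2

end RiemannSum

/-! ### Consistency of the lattice model -/

lemma continuous_angularMean {W : Type*} [TopologicalSpace W] {g : W → ℝ → ℝ}
    (hg : Continuous fun p : W × ℝ => g p.1 p.2) : Continuous (angularMean g) :=
  (intervalIntegral.continuous_parametric_intervalIntegral_of_continuous' hg _ _).const_mul _

lemma equivRealProd_mul_toComplex (h : ℝ) (ζ : GaussianInt) :
    Complex.equivRealProd (h * ζ) = (h * ζ.re, h * ζ.im) := by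
  simp [Complex.equivRealProd_apply]

lemma Qdisc_eq_sum_latticeAngularMean (g : ℝ × ℝ → ℝ → ℝ) {h : ℝ} (hh : 0 < h) (R : ℝ) :
    Qdisc g h R = h ^ 2 * ∑ ζ ∈ gaussianBall ⌊R ^ 2 / h ^ 2⌋₊,
      latticeAngularMean g (Complex.equivRealProd (h * ζ)) ζ := by
  have h_index : {ζ : ℤ × ℤ | ζ ≠ 0 ∧ h ^ 2 * ((ζ.1 : ℝ) ^ 2 + (ζ.2 : ℝ) ^ 2) ≤ R ^ 2} =
      (gaussianBall ⌊R ^ 2 / h ^ 2⌋₊).map gaussianEquiv.symm.toEmbedding := by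
    ext ζ
    have h_zero : gaussianEquiv ζ ≠ 0 ↔ ζ ≠ 0 := gaussianEquiv.injective.ne_iff' rfl
    have h_norm : ((gaussianEquiv ζ).norm : ℝ) = (ζ.1 : ℝ) ^ 2 + (ζ.2 : ℝ) ^ 2 := by
      rw [norm_eq_sq_add_sq]
      push_cast
      rfl
    rw [Set.mem_ofPred_eq, mem_coe, mem_map_equiv, Equiv.symm_symm, mem_gaussianBall,
      norm_le_floor_iff hh, h_zero, h_norm]
  rw [Qdisc, h_index, finsum_mem_coe_finset, sum_map]
  congr 1
  refine sum_congr rfl fun ζ _ => ?_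
  rw [equivRealProd_mul_toComplex, latticeAngularMean, norm_eq_sq_add_sq]
  rfl

lemma tendsto_sq_mul_comp_floor {s : ℕ → ℝ} (hs : s =o[atTop] fun N => (N : ℝ)) {R : ℝ}
    (hR : 0 < R) : Tendsto (fun h : ℝ => h ^ 2 * s ⌊R ^ 2 / h ^ 2⌋₊) (𝓝[>] 0) (𝓝 0) := by
  have h_area : (fun h : ℝ => h ^ 2 * (⌊R ^ 2 / h ^ 2⌋₊ : ℝ)) =O[𝓝[>] 0] fun _ => (1 : ℝ) := by
    refine IsBigO.of_bound (R ^ 2) ?_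
    filter_upwards [self_mem_nhdsWithin] with h (hh : 0 < h)
    rw [Real.norm_of_nonneg (by positivity), norm_one, mul_one, mul_comm,
      ← le_div_iff₀ (by positivity)]
    exact Nat.floor_le (by positivity)
  exact (isLittleO_one_iff ℝ).mp
    (((isBigO_refl _ _).mul_isLittleO (hs.comp_tendsto (tendsto_floor_sq_div_sq hR))).trans_isBigO
      h_area)

theorem tendsto_Qdisc_integral_closedBall {g : ℝ × ℝ → ℝ → ℝ}
    (hper : ∀ w, Function.Periodic (g w) (2 * Real.pi))
    (hg : Continuous fun p : (ℝ × ℝ) × ℝ => g p.1 p.2) {R : ℝ} (hR : 0 < R) :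
    Tendsto (fun h => Qdisc g h R) (𝓝[>] 0)
      (𝓝 (∫ z in Metric.closedBall (0 : ℂ) R, angularMean g (Complex.equivRealProd z))) := by
  have h_equiv : Continuous Complex.equivRealProd := Complex.equivRealProdCLM.continuous
  have h_riemann :=
    tendsto_sq_smul_sum_gaussianBall ((continuous_angularMean hg).comp h_equiv) hR.le
  obtain ⟨b, hb0, hb, h_littleO⟩ := exists_angular_error_bound hper hg
    ((isCompact_closedBall (0 : ℂ) R).image h_equiv)
  refine h_riemann.congr_dist (squeeze_zero' (.of_forall fun _ => dist_nonneg) ?_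
    (tendsto_sq_mul_comp_floor h_littleO hR))
  filter_upwards [self_mem_nhdsWithin] with h (hh : 0 < h)
  rw [Qdisc_eq_sum_latticeAngularMean g hh, smul_eq_mul, dist_comm, Real.dist_eq, ← mul_sub,
    ← sum_sub_distrib, abs_mul, abs_of_nonneg (sq_nonneg h)]
  gcongr
  refine (abs_sum_le_sum_abs _ _).trans
    (sum_abs_latticeAngularMean_sub_le hb0 hb fun ζ hζ => Set.mem_image_of_mem _ ?_)
  exact ((mem_gaussianBall_floor hh hR.le).mp hζ).1

lemma integral_angularMean_equivRealProd (g : ℝ × ℝ → ℝ → ℝ) :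
    ∫ z : ℂ, angularMean g (Complex.equivRealProd z) = Qcont g :=
  Complex.volume_preserving_equiv_real_prod.integral_comp
    Complex.measurableEquivRealProd.measurableEmbedding (angularMean g)

lemma tendsto_integral_closedBall_angularMean {g : ℝ × ℝ → ℝ → ℝ}
    (hg : Integrable (angularMean g)) :
    Tendsto (fun R => ∫ z in Metric.closedBall (0 : ℂ) R, angularMean g (Complex.equivRealProd z))
      atTop (𝓝 (Qcont g)) := by
  rw [← integral_angularMean_equivRealProd]
  exact (aecover_closedBall tendsto_id).integral_tendsto_of_countably_generated
    ((Complex.volume_preserving_equiv_real_prod.integrable_comp_emb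
      Complex.measurableEquivRealProd.measurableEmbedding).mpr hg)

lemma exists_diagonal_tendsto {α β X : Type*} [PseudoMetricSpace X] {l : Filter α} {l' : Filter β}
    [l'.NeBot] {S : Set β} (hS : S ∈ l') {ε : α → ℝ} (hε : Tendsto ε l (𝓝[>] 0)) {q : α → β → X}
    {I : β → X} {x : X} (hq : ∀ b ∈ S, Tendsto (fun a => q a b) l (𝓝 (I b)))
    (hI : Tendsto I l' (𝓝 x)) :
    ∃ r : α → β, (∀ a, r a ∈ S) ∧ Tendsto (fun a => q a (r a)) l (𝓝 x) := by
  have h_bdd : ∀ a, BddBelow ((fun b => dist (q a b) x) '' S) := fun a =>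
    ⟨0, by rintro _ ⟨b, -, rfl⟩; exact dist_nonneg⟩
  -- Choose `r a ∈ S` to minimise the distance from `q a b` to `x` up to an error `ε a`.
  have h_near_min : ∀ a, ∃ r ∈ S, 0 < ε a →
      dist (q a r) x < sInf ((fun b => dist (q a b) x) '' S) + ε a := by
    intro a
    obtain ⟨b, hb⟩ := l'.nonempty_of_mem hS
    by_cases ha : 0 < ε a
    · obtain ⟨_, ⟨r, hr, rfl⟩, h_lt⟩ := Real.lt_sInf_add_pos (Set.Nonempty.image _ ⟨b, hb⟩) ha
      exact ⟨r, hr, fun _ => h_lt⟩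
    · exact ⟨b, hb, fun h => absurd h ha⟩
  choose r hrS h_min using h_near_min
  refine ⟨r, hrS, Metric.tendsto_nhds.mpr fun η hη => ?_⟩
  obtain ⟨b, hbI, hbS⟩ :=
    ((Metric.tendsto_nhds.mp hI (η / 3) (by positivity)).and hS).exists
  filter_upwards [Metric.tendsto_nhds.mp (hq b hbS) (η / 3) (by positivity),
    hε (Ioo_mem_nhdsGT (by positivity : 0 < η / 3))] with a haq haε
  calc dist (q a (r a)) x
      < sInf ((fun b => dist (q a b) x) '' S) + ε a := h_min a haε.1
    _ ≤ dist (q a b) x + ε a := by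
        gcongr
        exact csInf_le (h_bdd a) (Set.mem_image_of_mem _ hbS)
    _ ≤ dist (q a b) (I b) + dist (I b) x + ε a := by
        gcongr
        exact dist_triangle _ _ _
    _ < η := by linarith [haε.2]

lemma continuous_uncurry_of_norm_fderiv_le {E F Θ : Type*} [NormedAddCommGroup E]
    [NormedSpace ℝ E] [NormedAddCommGroup F] [NormedSpace ℝ F] [TopologicalSpace Θ]
    {g : E → Θ → F} {C : ℝ} (hdiff : ∀ θ, Differentiable ℝ fun w => g w θ)
    (hC : ∀ w θ, ‖fderiv ℝ (fun w => g w θ) w‖ ≤ C) (hcont : ∀ w, Continuous (g w)) :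
    Continuous fun p : E × Θ => g p.1 p.2 :=
  continuous_prod_of_continuous_lipschitzWith _ C.toNNReal hcont fun θ =>
    lipschitzWith_of_nnnorm_fderiv_le (hdiff θ) fun w =>
      NNReal.coe_le_coe.mp ((hC w θ).trans (Real.le_coe_toNNReal C))

section Integrability

variable {W : Type*} [TopologicalSpace W] [MeasurableSpace W] [BorelSpace W]
  [SecondCountableTopologyEither W ℝ] {μ : Measure W} {g : W → ℝ → ℝ} {C : ℝ}

lemma integrable_angularMean [SFinite μ] (hg : Continuous fun p : W × ℝ => g p.1 p.2)
    (hint : ∀ θ, Integrable (fun w => g w θ) μ) (hC : ∀ θ, ∫ w, |g w θ| ∂μ ≤ C) :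
    Integrable (angularMean g) μ := by
  have h_meas : AEStronglyMeasurable (fun p : W × ℝ => g p.1 p.2)
      (μ.prod (volume.restrict (Set.Ioc (-Real.pi) Real.pi))) := hg.aestronglyMeasurable
  have h_prod : Integrable (fun p : W × ℝ => g p.1 p.2)
      (μ.prod (volume.restrict (Set.Ioc (-Real.pi) Real.pi))) := by
    refine (integrable_prod_iff' h_meas).mpr ⟨.of_forall hint,
      .of_bound h_meas.norm.prod_swap.integral_prod_right' C (.of_forall fun θ => ?_)⟩
    rw [Real.norm_of_nonneg (integral_nonneg fun _ => norm_nonneg _)]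
    exact hC θ
  have h_eq : angularMean g =
      fun w => 1 / (2 * Real.pi) * ∫ θ in Set.Ioc (-Real.pi) Real.pi, g w θ := by
    ext w
    rw [angularMean, intervalIntegral.integral_of_le (by linarith [Real.pi_pos])]
  rw [h_eq]
  exact h_prod.integral_prod_left.const_mul _

lemma integrable_angularMean_of_weight [SFinite μ] (hg : Continuous fun p : W × ℝ => g p.1 p.2)
    {ρ : W → ℝ} (hρ : ∀ w, 1 ≤ ρ w) (hint : ∀ θ, Integrable (fun w => |g w θ| * ρ w) μ)
    (hC : ∀ θ, ∫ w, |g w θ| * ρ w ∂μ ≤ C) : Integrable (angularMean g) μ := by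
  have h_le : ∀ θ w, |g w θ| ≤ |g w θ| * ρ w := fun θ w =>
    le_mul_of_one_le_right (abs_nonneg _) (hρ w)
  have h_int : ∀ θ, Integrable (fun w => g w θ) μ := fun θ =>
    (hint θ).mono' (hg.comp (.prodMk_left θ)).aestronglyMeasurable (.of_forall (h_le θ))
  exact integrable_angularMean hg h_int fun θ =>
    (integral_mono (h_int θ).abs (hint θ) (h_le θ)).trans (hC θ)

end Integrability

end LatticeDVM

theorem consistency_of_lattice_DVM_general {g : ℝ × ℝ → ℝ → ℝ}
    (hper : ∀ w, Function.Periodic (g w) (2 * Real.pi))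
    (hg : Continuous fun p : (ℝ × ℝ) × ℝ => g p.1 p.2)
    (hint : MeasureTheory.Integrable (LatticeDVM.angularMean g)) :
    ∃ R : ℝ → ℝ, (∀ h : ℝ, 0 < h → 0 < R h) ∧
      Filter.Tendsto (fun h : ℝ => Qdisc g h (R h))
        (nhdsWithin 0 (Set.Ioi 0)) (nhds (Qcont g)) := by
  obtain ⟨R, hR, h_lim⟩ := LatticeDVM.exists_diagonal_tendsto (Filter.Ioi_mem_atTop 0)
    Filter.tendsto_id (fun _ hR => LatticeDVM.tendsto_Qdisc_integral_closedBall hper hg hR)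
    (LatticeDVM.tendsto_integral_closedBall_angularMean hint)
  exact ⟨R, fun h _ => hR h, h_lim⟩

/-- Consistency: there is a truncation radius `R(h)` such that the discrete velocity
model `Q^{h,R(h)}` on the lattice `hℤ²` converges to `Q` as `h → 0⁺`. -/
theorem consistency_of_lattice_DVM
    (g : ℝ × ℝ → ℝ → ℝ)
    (hper : ∀ w, Function.Periodic (g w) (2 * Real.pi))
    (hw1 : ∀ θ, ContDiff ℝ 1 (fun w => g w θ))
    (hwbdd : ∃ C : ℝ, ∀ w θ, |g w θ| ≤ C ∧ ‖fderiv ℝ (fun w' => g w' θ) w‖ ≤ C)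
    (hθ2 : ∀ w, ContDiff ℝ 2 (g w))
    (hθbdd : ∃ C : ℝ, ∀ w θ, |deriv (deriv (g w)) θ| ≤ C)
    (hint : ∀ θ, MeasureTheory.Integrable (fun w : ℝ × ℝ => |g w θ| * (1 + ‖w‖ ^ 2)))
    (hC0 : ∃ C₀ : ℝ, ∀ θ, (∫ w : ℝ × ℝ, |g w θ| * (1 + ‖w‖ ^ 2)) ≤ C₀) :
    ∃ R : ℝ → ℝ, (∀ h : ℝ, 0 < h → 0 < R h) ∧
      Filter.Tendsto (fun h : ℝ => Qdisc g h (R h))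
        (nhdsWithin 0 (Set.Ioi 0)) (nhds (Qcont g)) := by
  obtain ⟨C, hC⟩ := hwbdd
  obtain ⟨C₀, hC₀⟩ := hC0
  have hg := LatticeDVM.continuous_uncurry_of_norm_fderiv_le
    (fun θ => (hw1 θ).differentiable one_ne_zero) (fun w θ => (hC w θ).2)
    (fun w => (hθ2 w).continuous)
  exact consistency_of_lattice_DVM_general hper hg
    (LatticeDVM.integrable_angularMean_of_weight hg (fun w => by linarith [sq_nonneg ‖w‖]) hint hC₀)
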